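/- Fix c₁, c₂ > 0 with c₁ ≠ c₂. There is a constant C (depending only on c₁, c₂) such that for all scalar u, v ∈ C₀^∞(ℝ×ℝ³) and all t ≥ 0: ∫_{ℝ³} |∂²u(t,x)| |∂v(t,x)| ⟨x⟩^{−1} dx ≤ C⟨t⟩^{−1}( Σ_{|α|≤1} ‖Γ^α u'(t,·)‖₂ + ‖⟨t+r⟩(∂_t² − c₁²Δ)u(t,·)‖₂ ) · ‖⟨x⟩^{−1} v'(t,·)‖₂ + C⟨t⟩^{−4/3}( Σ_{|α|≤1} ‖Γ^α u'(t,·)‖₂ + ‖⟨t+r⟩(∂_t² − c₁²Δ)u(t,·)‖₂ ) · ( Σ_{|α|≤1} ‖Γ^α v'(t,·)‖₂ + ‖⟨t+r⟩(∂_t² − c₂²Δ)v(t,·)‖₂ ), where |∂²u| denotes the sum of absolute values of all second space-time derivatives of u. -/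

import Mathlib

open MeasureTheory Real Finset

noncomputable section

/-- Points of space-time `ℝ×ℝ³`, written `X = (x₀,x₁,x₂,x₃)` with `x₀ = t`. -/
abbrev Pt : Type := Fin 4 → ℝ
/-- Points of space `ℝ³`. -/
abbrev Sp : Type := Fin 3 → ℝ

/-- Space-time partial derivative `∂_a`. -/
def pd (a : Fin 4) (u : Pt → ℝ) : Pt → ℝ := fun X => fderiv ℝ u X (Pi.single a 1)

/-- Rotation field `Ω_{ij} = x_i ∂_j - x_j ∂_i` (space-time indices). -/
def rot (i j : Fin 4) (u : Pt → ℝ) : Pt → ℝ := fun X => X i * pd j u X - X j * pd i u X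

/-- Scaling field `S = t ∂_t + x·∇_x = x^a ∂_a`. -/
def scal (u : Pt → ℝ) : Pt → ℝ := fun X => ∑ a, X a * pd a u X

/-- The eight vector fields `Γ = (∂, Ω, S)`. -/
def Gam : Fin 8 → (Pt → ℝ) → Pt → ℝ :=
  ![pd 0, pd 1, pd 2, pd 3, rot 1 2, rot 1 3, rot 2 3, scal]

/-- `Γ^α` for a multi-index `α` (a word in the eight fields) of length `m`. -/
def GamComp : ∀ {m : ℕ}, (Fin m → Fin 8) → (Pt → ℝ) → Pt → ℝ
  | 0, _, u => u
  | _ + 1, α, u => Gam (α 0) (GamComp (fun i => α i.succ) u)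

/-- Euclidean length `r = |x|` of a spatial point. -/
def rad (x : Sp) : ℝ := Real.sqrt (∑ i, (x i) ^ 2)

/-- Japanese bracket `⟨z⟩ = (1+z²)^{1/2}`. -/
def jb (z : ℝ) : ℝ := Real.sqrt (1 + z ^ 2)

/-- Euclidean norm `|∂u|` of the space-time gradient. -/
def gradNorm (u : Pt → ℝ) (X : Pt) : ℝ := Real.sqrt (∑ a, (pd a u X) ^ 2)

/-- The unit-speed d'Alembertian `□ = ∂_t² - Δ_x`. -/
def box1 (u : Pt → ℝ) : Pt → ℝ := fun X =>
  pd 0 (pd 0 u) X - ∑ j : Fin 3, pd j.succ (pd j.succ u) X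

/-- The d'Alembertian `∂_t² - c²Δ_x` with speed `c`. -/
def boxc (c : ℝ) (u : Pt → ℝ) : Pt → ℝ := fun X =>
  pd 0 (pd 0 u) X - c ^ 2 * ∑ j : Fin 3, pd j.succ (pd j.succ u) X

/-- The recurring right-hand factor
`Σ_{|α|≤1}‖Γ^α u'(t,·)‖₂ + ‖⟨t+r⟩(∂_t²-c²Δ)u(t,·)‖₂`. -/
def Qfac (cs : ℝ) (u : Pt → ℝ) (t : ℝ) : ℝ :=
  (∑ m ∈ Finset.range 2, ∑ α : Fin m → Fin 8,
      (∫ x : Sp, ∑ a, (GamComp α (pd a u) (Fin.cons t x)) ^ 2) ^ ((1:ℝ)/2))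
    + (∫ x : Sp, jb (t + rad x) ^ 2 * (boxc cs u (Fin.cons t x)) ^ 2) ^ ((1:ℝ)/2)

/-- `|∂²u|`: the sum of the absolute values of all second space-time derivatives. -/
def d2abs (u : Pt → ℝ) (X : Pt) : ℝ := ∑ a, ∑ b, |pd a (pd b u) X|


/-! ### Basic calculus on slices -/

/-- Spatial partial derivative. -/
def sd (i : Fin 3) (f : Sp → ℝ) : Sp → ℝ := fun x => fderiv ℝ f x (Pi.single i 1)

/-- Time slice of a space-time function. -/
def sl (t : ℝ) (g : Pt → ℝ) : Sp → ℝ := fun x => g (Fin.cons t x)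

theorem contDiff_pd {u : Pt → ℝ} (hu : ContDiff ℝ (⊤ : ℕ∞) u) (a : Fin 4) :
    ContDiff ℝ (⊤ : ℕ∞) (pd a u) := by
  unfold pd
  exact (hu.fderiv_right (m := (⊤ : ℕ∞)) (by simp)).clm_apply contDiff_const

theorem hcs_pd {u : Pt → ℝ} (hu : HasCompactSupport u) (a : Fin 4) :
    HasCompactSupport (pd a u) := by
  unfold pd
  exact hu.fderiv_apply ℝ _

theorem pd_comm {u : Pt → ℝ} (hu : ContDiff ℝ (⊤ : ℕ∞) u) (a b : Fin 4) :
    pd a (pd b u) = pd b (pd a u) := by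
  have hd : Differentiable ℝ (fderiv ℝ u) :=
    (hu.fderiv_right (m := (⊤ : ℕ∞)) (by simp)).differentiable (by simp)
  have key : ∀ (a b : Fin 4) (X : Pt), pd a (pd b u) X
      = fderiv ℝ (fderiv ℝ u) X (Pi.single a 1) (Pi.single b 1) := by
    intro a b X
    unfold pd
    rw [fderiv_clm_apply (hd X) (by fun_prop)]
    simp
  funext X
  rw [key, key]
  have hs : IsSymmSndFDerivAt ℝ u X :=
    hu.contDiffAt.isSymmSndFDerivAt (by
      simp only [minSmoothness_of_isRCLikeNormedField]
      exact WithTop.coe_le_coe.2 (le_top : (2 : ℕ∞) ≤ ⊤))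
  exact hs _ _

theorem contDiff_cons (t : ℝ) {n : WithTop ℕ∞} :
    ContDiff ℝ n (fun x : Sp => (Fin.cons t x : Pt)) := by
  rw [contDiff_pi]
  intro a
  refine Fin.cases ?_ (fun i => ?_) a
  · simp only [Fin.cons_zero]; exact contDiff_const
  · simp only [Fin.cons_succ]; exact contDiff_apply ℝ ℝ i

theorem contDiff_sl (t : ℝ) {n : WithTop ℕ∞} {g : Pt → ℝ} (hg : ContDiff ℝ n g) :
    ContDiff ℝ n (sl t g) := hg.comp (contDiff_cons t)

theorem hcs_sl (t : ℝ) {g : Pt → ℝ} (hg : HasCompactSupport g) :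
    HasCompactSupport (sl t g) := by
  refine HasCompactSupport.intro (K := (fun X : Pt => (Fin.tail X : Sp)) '' tsupport g)
    (hg.isCompact.image ?_) ?_
  · unfold Fin.tail; fun_prop
  · intro x hx
    by_contra h
    exact hx ⟨Fin.cons t x, subset_tsupport _ h, by simp⟩

theorem sd_sl (t : ℝ) {g : Pt → ℝ} (hg : Differentiable ℝ g) (i : Fin 3) :
    sd i (sl t g) = sl t (pd i.succ g) := by
  funext x
  have h1 : HasLineDerivAt ℝ g (pd i.succ g (Fin.cons t x)) (Fin.cons t x) (Pi.single i.succ 1) :=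
    (hg _).hasFDerivAt.hasLineDerivAt _
  have hd : Differentiable ℝ (sl t g) :=
    hg.comp ((contDiff_cons (n := 1) t).differentiable (by simp))
  have h2 : HasLineDerivAt ℝ (sl t g) (sd i (sl t g) x) x (Pi.single i 1) :=
    (hd _).hasFDerivAt.hasLineDerivAt _
  have e : (fun h : ℝ => sl t g (x + h • Pi.single i 1))
      = fun h : ℝ => g (Fin.cons t x + h • Pi.single i.succ 1) := by
    funext h
    unfold sl
    congr 1
    funext a
    refine Fin.cases ?_ (fun k => ?_) a
    · simp [Pi.single_apply, (Fin.succ_ne_zero i).symm]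
    · simp [Pi.single_apply]
  unfold HasLineDerivAt at h1 h2
  rw [e] at h2
  exact h2.unique h1

theorem int_sd {F : Sp → ℝ} (hF : ContDiff ℝ 1 F) (hc : HasCompactSupport F) (i : Fin 3) :
    Integrable (sd i F) ∧ ∫ x, sd i F x = 0 := by
  have hcont : Continuous (sd i F) := by
    unfold sd
    exact ((hF.continuous_fderiv (by simp)).clm_apply continuous_const)
  have hcs : HasCompactSupport (sd i F) := hc.fderiv_apply ℝ _
  have hi := hcont.integrable_of_hasCompactSupport (μ := volume) hcs
  refine ⟨hi, ?_⟩
  have h := integral_mul_fderiv_eq_neg_fderiv_mul_of_integrable (𝕜 := ℝ) (μ := (volume : Measure Sp))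
    (f := fun _ : Sp => (1:ℝ)) (g := F) (v := Pi.single i 1) (by simp)
    (by simp only [one_mul]; exact hi)
    (by simpa using hF.continuous.integrable_of_hasCompactSupport (μ := volume) hc)
    (fun x _ => differentiableAt_const _) (fun x _ => (hF.differentiable (by simp)) x)
  simpa [sd] using h

/-- Continuous with compact support. -/
def Good (f : Sp → ℝ) : Prop := Continuous f ∧ HasCompactSupport f

theorem Good.integrable {f : Sp → ℝ} (h : Good f) : Integrable f :=
  h.1.integrable_of_hasCompactSupport h.2

theorem Good.mul_left {f g : Sp → ℝ} (h : Good f) (hg : Continuous g) :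
    Good (fun x => g x * f x) := ⟨hg.mul h.1, h.2.mul_left⟩

theorem Good.mul_right {f g : Sp → ℝ} (h : Good f) (hg : Continuous g) :
    Good (fun x => f x * g x) := ⟨h.1.mul hg, h.2.mul_right⟩

theorem Good.sq {f : Sp → ℝ} (h : Good f) : Good (fun x => f x ^ 2) := by
  simpa [pow_two] using h.mul_right h.1

theorem Good.add {f g : Sp → ℝ} (h : Good f) (hg : Good g) : Good (fun x => f x + g x) :=
  ⟨h.1.add hg.1, h.2.add hg.2⟩

theorem Good.sum {ι : Type*} (s : Finset ι) {f : ι → Sp → ℝ} (h : ∀ i, Good (f i)) :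
    Good (fun x => ∑ i ∈ s, f i x) := by
  classical
  induction s using Finset.induction_on with
  | empty => simpa using ⟨continuous_const, HasCompactSupport.zero⟩
  | insert a s ha ih => 
    simp only [Finset.sum_insert ha]
    exact (h a).add ih

theorem good_sl {g : Pt → ℝ} (t : ℝ) (h : Continuous g) (hg : HasCompactSupport g) :
    Good (fun x => g (Fin.cons t x)) :=
  ⟨h.comp (contDiff_cons (n := 1) t).continuous, hcs_sl t hg⟩

theorem cont_gam {g : Pt → ℝ} (hg : ContDiff ℝ (⊤ : ℕ∞) g) (k : Fin 8) : Continuous (Gam k g) := by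
  have h : ∀ a, Continuous (pd a g) := fun a => (contDiff_pd hg a).continuous
  have h0 := h 0
  have h1 := h 1
  have h2 := h 2
  have h3 := h 3
  have hr : ∀ i j, Continuous (rot i j g) := by
    intro i j
    have hi := h i
    have hj := h j
    unfold rot
    fun_prop
  have hs : Continuous (scal g) := by
    unfold scal
    simp only [Fin.sum_univ_four]
    fun_prop
  fin_cases k
  · exact h0
  · exact h1
  · exact h2
  · exact h3
  · exact hr 1 2
  · exact hr 1 3
  · exact hr 2 3
  · exact hs

theorem hcs_gam {g : Pt → ℝ} (hg : HasCompactSupport g) (k : Fin 8) :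
    HasCompactSupport (Gam k g) := by
  refine HasCompactSupport.intro hg.isCompact (fun X hX => ?_)
  have h : ∀ a, pd a g X = 0 := by
    intro a
    by_contra hne
    exact hX (tsupport_fderiv_subset ℝ (subset_tsupport _ (by
      intro h0; exact hne (by simp [pd, h0]))))
  fin_cases k <;> simp [Gam, rot, scal, h]

/-! ### Pointwise algebra -/

/-- Cauchy-Schwarz for eleven terms, with square-bounded coefficients. -/
theorem cs_list {n : ℕ} (a b : Fin n → ℝ) (A : ℝ) (hA : ∀ k, a k ^ 2 ≤ A) :
    (∑ k, a k * b k) ^ 2 ≤ n * A * ∑ k, b k ^ 2 := by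
  refine (Finset.sum_mul_sq_le_sq_mul_sq _ _ _).trans ?_
  refine mul_le_mul_of_nonneg_right ?_ (Finset.sum_nonneg fun _ _ => sq_nonneg _)
  refine (Finset.sum_le_sum (fun k _ => hA k)).trans ?_
  simp

theorem sq_le_J (t x y z : ℝ) : t ^ 2 ≤ 1 + t ^ 2 + (x ^ 2 + y ^ 2 + z ^ 2) ∧
    x ^ 2 ≤ 1 + t ^ 2 + (x ^ 2 + y ^ 2 + z ^ 2) ∧ y ^ 2 ≤ 1 + t ^ 2 + (x ^ 2 + y ^ 2 + z ^ 2) ∧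
    z ^ 2 ≤ 1 + t ^ 2 + (x ^ 2 + y ^ 2 + z ^ 2) ∧
    x ^ 2 + y ^ 2 + z ^ 2 ≤ 1 + t ^ 2 + (x ^ 2 + y ^ 2 + z ^ 2) := by
  refine ⟨?_, ?_, ?_, ?_, ?_⟩ <;>
    linarith [sq_nonneg t, sq_nonneg x, sq_nonneg y, sq_nonneg z]

theorem four (a b c d : ℝ) : (a + b + c + d) ^ 2 ≤ 4 * (a ^ 2 + b ^ 2 + c ^ 2 + d ^ 2) := by
  nlinarith [sq_nonneg (a - b), sq_nonneg (a - c), sq_nonneg (a - d), sq_nonneg (b - c),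
    sq_nonneg (b - d), sq_nonneg (c - d)]

theorem k_bounds (c : ℝ) : 1 ≤ (c ^ 2 + 1) ^ 2 ∧ c ^ 4 ≤ (c ^ 2 + 1) ^ 2 := by
  have h : (c ^ 2 + 1) ^ 2 = c ^ 4 + 2 * c ^ 2 + 1 := by ring
  have h2 : 0 ≤ c ^ 4 := by positivity
  rw [h]
  constructor <;> linarith [sq_nonneg c]

set_option maxHeartbeats 1600000 in
/-- Weighted bound on the Laplacian. -/
theorem alg_lap (c t x y z h00 h01 h02 h03 h11 h12 h13 h22 h23 h33 E : ℝ)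
    (hS0 : (t * h00 + x * h01 + y * h02 + z * h03) ^ 2 ≤ E)
    (hS1 : (t * h01 + x * h11 + y * h12 + z * h13) ^ 2 ≤ E)
    (hS2 : (t * h02 + x * h12 + y * h22 + z * h23) ^ 2 ≤ E)
    (hS3 : (t * h03 + x * h13 + y * h23 + z * h33) ^ 2 ≤ E)
    (hA1 : (x * h12 - y * h11) ^ 2 ≤ E) (hA2 : (x * h22 - y * h12) ^ 2 ≤ E)
    (hB1 : (x * h13 - z * h11) ^ 2 ≤ E) (hB3 : (x * h33 - z * h13) ^ 2 ≤ E)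
    (hC2 : (y * h23 - z * h22) ^ 2 ≤ E) (hC3 : (y * h33 - z * h23) ^ 2 ≤ E)
    (hf : (1 + t ^ 2 + (x ^ 2 + y ^ 2 + z ^ 2)) * (h00 - c ^ 2 * (h11 + h22 + h33)) ^ 2 ≤ E) :
    (c ^ 2 * t ^ 2 - (x ^ 2 + y ^ 2 + z ^ 2)) ^ 2 / (1 + t ^ 2 + (x ^ 2 + y ^ 2 + z ^ 2))
      * (h11 + h22 + h33) ^ 2 ≤ 121 * E := by
  have hJ : 0 < 1 + t ^ 2 + (x ^ 2 + y ^ 2 + z ^ 2) := by positivity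
  have h := cs_list (n := 11) ![t, -x, -y, -z, -x, y, -x, z, -y, z, -t]
    ![t * h00 + x * h01 + y * h02 + z * h03, t * h01 + x * h11 + y * h12 + z * h13,
      t * h02 + x * h12 + y * h22 + z * h23, t * h03 + x * h13 + y * h23 + z * h33,
      x * h22 - y * h12, x * h12 - y * h11, x * h33 - z * h13, x * h13 - z * h11,
      y * h33 - z * h23, y * h23 - z * h22, t * (h00 - c ^ 2 * (h11 + h22 + h33))]
    (1 + t ^ 2 + (x ^ 2 + y ^ 2 + z ^ 2)) (by
      intro k
      obtain ⟨q0, q1, q2, q3, -⟩ := sq_le_J t x y z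
      fin_cases k
      · exact q0
      all_goals first
        | exact q1
        | exact q2
        | exact q3
        | exact (neg_sq _).trans_le q0
        | exact (neg_sq _).trans_le q1
        | exact (neg_sq _).trans_le q2
        | exact (neg_sq _).trans_le q3)
  have hf' : (t * (h00 - c ^ 2 * (h11 + h22 + h33))) ^ 2 ≤ E := by
    refine le_trans ?_ hf
    rw [mul_pow]
    exact mul_le_mul_of_nonneg_right (sq_le_J t x y z).1 (sq_nonneg _)
  rw [div_mul_eq_mul_div, div_le_iff₀ hJ]
  simp only [Fin.sum_univ_succ, Fin.sum_univ_zero] at h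
  simp at h
  calc _ = ((c ^ 2 * t ^ 2 - (x ^ 2 + y ^ 2 + z ^ 2)) * (h11 + h22 + h33)) ^ 2 := by ring
    _ = _ := by congr 1; ring
    _ ≤ _ := h
    _ ≤ 11 * (1 + t ^ 2 + (x ^ 2 + y ^ 2 + z ^ 2)) * (11 * E) := by
      refine mul_le_mul_of_nonneg_left ?_ (by positivity)
      linarith
    _ = _ := by ring

set_option maxHeartbeats 1600000 in
/-- Weighted bounds on the time derivatives. -/
theorem alg_time (c t x y z h00 h01 h02 h03 h11 h12 h13 h22 h23 h33 E : ℝ)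
    (hS0 : (t * h00 + x * h01 + y * h02 + z * h03) ^ 2 ≤ E)
    (hS1 : (t * h01 + x * h11 + y * h12 + z * h13) ^ 2 ≤ E)
    (hS2 : (t * h02 + x * h12 + y * h22 + z * h23) ^ 2 ≤ E)
    (hS3 : (t * h03 + x * h13 + y * h23 + z * h33) ^ 2 ≤ E)
    (hA0 : (x * h02 - y * h01) ^ 2 ≤ E)
    (hA1 : (x * h12 - y * h11) ^ 2 ≤ E) (hA2 : (x * h22 - y * h12) ^ 2 ≤ E)
    (hB0 : (x * h03 - z * h01) ^ 2 ≤ E)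
    (hB1 : (x * h13 - z * h11) ^ 2 ≤ E) (hB3 : (x * h33 - z * h13) ^ 2 ≤ E)
    (hC0 : (y * h03 - z * h02) ^ 2 ≤ E)
    (hC2 : (y * h23 - z * h22) ^ 2 ≤ E) (hC3 : (y * h33 - z * h23) ^ 2 ≤ E)
    (hd1 : h01 ^ 2 ≤ E) (hd2 : h02 ^ 2 ≤ E) (hd3 : h03 ^ 2 ≤ E)
    (hf : (1 + t ^ 2 + (x ^ 2 + y ^ 2 + z ^ 2)) * (h00 - c ^ 2 * (h11 + h22 + h33)) ^ 2 ≤ E)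
    (s J : ℝ) (hJ : J = 1 + t ^ 2 + (x ^ 2 + y ^ 2 + z ^ 2)) (hs0 : 0 ≤ s)
    (hs : s ≤ (c ^ 2 + 1) ^ 2 * J)
    (hl : s * (h11 + h22 + h33) ^ 2 ≤ 121 * E) :
    s * (h00 ^ 2 + h01 ^ 2 + h02 ^ 2 + h03 ^ 2) ≤ 10000 * (c ^ 2 + 1) ^ 2 * E := by
  set L := h11 + h22 + h33 with hL
  set k := (c ^ 2 + 1) ^ 2 with hk
  have hE : 0 ≤ E := le_trans (sq_nonneg _) hd1
  have hJ0 : 0 < J := by rw [hJ]; positivity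
  have hk1 : 1 ≤ k := (k_bounds c).1
  have hkc : c ^ 4 ≤ k := (k_bounds c).2
  -- the second time derivative
  have h0 : s * h00 ^ 2 ≤ 244 * k * E := by
    have e1 : h00 ^ 2 ≤ 2 * c ^ 4 * L ^ 2 + 2 * (h00 - c ^ 2 * L) ^ 2 := by
      have := sq_nonneg (h00 - 2 * c ^ 2 * L)
      have e : 2 * c ^ 4 * L ^ 2 + 2 * (h00 - c ^ 2 * L) ^ 2 - h00 ^ 2
        = (h00 - 2 * c ^ 2 * L) ^ 2 := by ring
      linarith only [this, e]
    have e2 : s * (h00 - c ^ 2 * L) ^ 2 ≤ k * E := by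
      calc s * (h00 - c ^ 2 * L) ^ 2 ≤ k * J * (h00 - c ^ 2 * L) ^ 2 :=
            mul_le_mul_of_nonneg_right hs (sq_nonneg _)
        _ = k * (J * (h00 - c ^ 2 * L) ^ 2) := by ring
        _ ≤ k * E := mul_le_mul_of_nonneg_left (by rw [hJ]; exact hf) (by linarith)
    have e3 : c ^ 4 * (s * L ^ 2) ≤ k * (121 * E) :=
      mul_le_mul hkc hl (by positivity) (by linarith)
    have e4 := mul_le_mul_of_nonneg_left e1 hs0
    have e5 : s * (2 * c ^ 4 * L ^ 2 + 2 * (h00 - c ^ 2 * L) ^ 2)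
      = 2 * (c ^ 4 * (s * L ^ 2)) + 2 * (s * (h00 - c ^ 2 * L) ^ 2) := by ring
    linarith only [e2, e3, e4, e5]
  set W := h01 ^ 2 + h02 ^ 2 + h03 ^ 2 with hW
  have hr : (x ^ 2 + y ^ 2 + z ^ 2) * W ≤ 5 * E + 2 * t ^ 2 * h00 ^ 2 := by
    have e1 : (x ^ 2 + y ^ 2 + z ^ 2) * W = (x * h01 + y * h02 + z * h03) ^ 2
      + (x * h02 - y * h01) ^ 2 + (x * h03 - z * h01) ^ 2 + (y * h03 - z * h02) ^ 2 := by
      rw [hW]; ring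
    have e2 : (x * h01 + y * h02 + z * h03) ^ 2 ≤
        2 * (t * h00 + x * h01 + y * h02 + z * h03) ^ 2 + 2 * t ^ 2 * h00 ^ 2 := by
      have := sq_nonneg ((t * h00 + x * h01 + y * h02 + z * h03) + t * h00)
      have e : 2 * (t * h00 + x * h01 + y * h02 + z * h03) ^ 2 + 2 * t ^ 2 * h00 ^ 2
        - (x * h01 + y * h02 + z * h03) ^ 2
        = ((t * h00 + x * h01 + y * h02 + z * h03) + t * h00) ^ 2 := by ring
      linarith only [this, e]
    linarith only [e1, e2, hS0, hA0, hB0, hC0]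
  have ht : t ^ 2 * W ≤ 36 * E + 4 * (x ^ 2 + y ^ 2 + z ^ 2) * L ^ 2 := by
    have e1 : (t * h01) ^ 2 ≤ 12 * E + 4 * (x * L) ^ 2 := by
      have := four (t * h01 + x * h11 + y * h12 + z * h13) (-(x * L)) (x * h22 - y * h12)
        (x * h33 - z * h13)
      have e : (t * h01 + x * h11 + y * h12 + z * h13) + (-(x * L)) + (x * h22 - y * h12)
        + (x * h33 - z * h13) = t * h01 := by rw [hL]; ring
      rw [e, neg_sq] at this; linarith only [this, hS1, hA2, hB3]
    have e2 : (t * h02) ^ 2 ≤ 12 * E + 4 * (y * L) ^ 2 := by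
      have := four (t * h02 + x * h12 + y * h22 + z * h23) (-(y * L)) (-(x * h12 - y * h11))
        (y * h33 - z * h23)
      have e : (t * h02 + x * h12 + y * h22 + z * h23) + (-(y * L)) + (-(x * h12 - y * h11))
        + (y * h33 - z * h23) = t * h02 := by rw [hL]; ring
      rw [e, neg_sq, neg_sq] at this; linarith only [this, hS2, hA1, hC3]
    have e3 : (t * h03) ^ 2 ≤ 12 * E + 4 * (z * L) ^ 2 := by
      have := four (t * h03 + x * h13 + y * h23 + z * h33) (-(z * L)) (-(x * h13 - z * h11))
        (-(y * h23 - z * h22))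
      have e : (t * h03 + x * h13 + y * h23 + z * h33) + (-(z * L)) + (-(x * h13 - z * h11))
        + (-(y * h23 - z * h22)) = t * h03 := by rw [hL]; ring
      rw [e, neg_sq, neg_sq, neg_sq] at this; linarith only [this, hS3, hB1, hC2]
    rw [hW]; linarith only [e1, e2, e3]
  have hJW : J * W ≤ 44 * E + J * (4 * L ^ 2 + 2 * h00 ^ 2) := by
    have e1 : t ^ 2 * h00 ^ 2 ≤ J * h00 ^ 2 :=
      mul_le_mul_of_nonneg_right (by rw [hJ]; exact (sq_le_J t x y z).1)
        (sq_nonneg _)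
    have e2 : (x ^ 2 + y ^ 2 + z ^ 2) * L ^ 2 ≤ J * L ^ 2 :=
      mul_le_mul_of_nonneg_right (by rw [hJ]; exact (sq_le_J t x y z).2.2.2.2) (sq_nonneg _)
    have e3 : J * W = W + t ^ 2 * W + (x ^ 2 + y ^ 2 + z ^ 2) * W := by rw [hJ]; ring
    have e4 : W ≤ 3 * E := by rw [hW]; linarith
    rw [e3]; linarith
  have hsW : s * W ≤ 44 * k * E + 4 * (s * L ^ 2) + 2 * (s * h00 ^ 2) := by
    have e1 : s / J ≤ k := by rw [div_le_iff₀ hJ0]; exact hs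
    have e2 := mul_le_mul_of_nonneg_left hJW (div_nonneg hs0 hJ0.le)
    have e3 : s / J * (J * W) = s * W := by field_simp
    have e4 : s / J * (44 * E + J * (4 * L ^ 2 + 2 * h00 ^ 2))
      = s / J * (44 * E) + 4 * (s * L ^ 2) + 2 * (s * h00 ^ 2) := by field_simp; ring
    have e5 : s / J * (44 * E) ≤ k * (44 * E) := mul_le_mul_of_nonneg_right e1 (by linarith)
    rw [e3, e4] at e2
    linarith
  have hkE : E ≤ k * E := le_mul_of_one_le_left hE hk1
  have : s * (h00 ^ 2 + h01 ^ 2 + h02 ^ 2 + h03 ^ 2) = s * h00 ^ 2 + s * W := by rw [hW]; ring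
  rw [this]
  linarith only [h0, hsW, hl, hkE, hE]

set_option maxHeartbeats 1600000 in
/-- The weight dichotomy. -/
theorem alg_weight (c₁ c₂ : ℝ) (hc₁ : 0 < c₁) (hc₂ : 0 < c₂) (hne : c₁ ≠ c₂) :
    ∃ C : ℝ, 1 ≤ C ∧ ∀ τ ρ : ℝ, 0 ≤ τ → 0 ≤ ρ →
      (1 + τ ≤ C * (1 + (c₁ ^ 2 * τ - ρ) ^ 2 / (1 + τ + ρ))) ∨
      ((1 + τ) * (1 + τ + (ρ - c₁ ^ 2 * τ) ^ 2) ≤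
        C * (1 + (c₁ ^ 2 * τ - ρ) ^ 2 / (1 + τ + ρ)) *
          (((c₂ ^ 2 * τ - ρ) / (1 + τ + ρ)) ^ 2 * ρ) * (1 + ρ)) := by
  set K : ℝ := 4 + 2 * c₁ ^ 2 with hK
  have hK0 : 4 ≤ K := by rw [hK]; nlinarith [sq_nonneg c₁]
  set g : ℝ := |c₁ ^ 2 - c₂ ^ 2| with hg
  have hg0 : 0 < g := by
    rw [hg, abs_pos, sub_ne_zero]
    intro h
    exact hne ((sq_eq_sq₀ hc₁.le hc₂.le).1 h)
  have hm : 0 < min (c₁ ^ 2) g := lt_min (by positivity) hg0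
  set δ : ℝ := min (1 / 2) (min (c₁ ^ 2) g / (2 * K)) with hδ
  have hδ0 : 0 < δ := lt_min (by norm_num) (by positivity)
  have hδ1 : δ ≤ 1 / 2 := min_le_left _ _
  have hδ2 : δ * K ≤ min (c₁ ^ 2) g / 2 := by
    have : δ ≤ min (c₁ ^ 2) g / (2 * K) := min_le_right _ _
    calc δ * K ≤ min (c₁ ^ 2) g / (2 * K) * K := mul_le_mul_of_nonneg_right this (by linarith)
      _ = _ := by field_simp
  set C3 : ℝ := 8 * K / c₁ ^ 4 * (2 * K / g) ^ 2 with hC3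
  have hC30 : 0 < C3 := by positivity
  refine ⟨2 + 1 / δ ^ 2 + C3, by have : 0 < 1 / δ ^ 2 := by positivity
                                 linarith, ?_⟩
  intro τ ρ hτ hρ
  have hJ : 0 < 1 + τ + ρ := by linarith
  set J := 1 + τ + ρ with hJd
  set s := (c₁ ^ 2 * τ - ρ) ^ 2 / J with hs
  have hs0 : 0 ≤ s := by positivity
  have hsJ : s * J = (c₁ ^ 2 * τ - ρ) ^ 2 := by rw [hs]; field_simp
  have hd2 : 0 < 1 / δ ^ 2 := by positivity
  by_cases hτ1 : τ ≤ 1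
  · left
    nlinarith [mul_nonneg hd2.le hs0, mul_nonneg hC30.le hs0]
  by_cases hM : δ * J ≤ |c₁ ^ 2 * τ - ρ|
  · left
    have h1 : (δ * J) ^ 2 ≤ (c₁ ^ 2 * τ - ρ) ^ 2 := by
      rw [← sq_abs (c₁ ^ 2 * τ - ρ)]
      exact pow_le_pow_left₀ (by positivity) hM 2
    have h2 : δ ^ 2 * J ≤ s := by
      rw [hs, le_div_iff₀ hJ]; nlinarith
    have h3 : J ≤ 1 / δ ^ 2 * s := by
      rw [one_div, inv_mul_eq_div, le_div_iff₀ (by positivity)]; linarith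
    nlinarith [mul_nonneg hC30.le hs0]
  · right
    push Not at hM hτ1
    have hM1 := abs_lt.1 hM
    have hρ1 : ρ ≤ 2 * (c₁ ^ 2 + 1) * τ := by nlinarith
    have hJK : J ≤ K * τ := by rw [hK, hJd]; nlinarith
    have hMτ : |c₁ ^ 2 * τ - ρ| ≤ min (c₁ ^ 2) g / 2 * τ := by
      calc |c₁ ^ 2 * τ - ρ| ≤ δ * J := hM.le
        _ ≤ δ * (K * τ) := mul_le_mul_of_nonneg_left hJK hδ0.le
        _ = δ * K * τ := by ring
        _ ≤ _ := mul_le_mul_of_nonneg_right hδ2 hτ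
    have hρ2 : c₁ ^ 2 / 2 * τ ≤ ρ := by
      have h1 := (abs_le.1 hMτ).2
      have h2 : min (c₁ ^ 2) g / 2 * τ ≤ c₁ ^ 2 / 2 * τ :=
        mul_le_mul_of_nonneg_right (by linarith [min_le_left (c₁ ^ 2) g]) hτ
      linarith
    have hθ1 : g / 2 * τ ≤ |c₂ ^ 2 * τ - ρ| := by
      have h1 : g * τ ≤ |c₁ ^ 2 * τ - ρ| + |c₂ ^ 2 * τ - ρ| := by
        rw [hg, ← abs_of_nonneg hτ, ← abs_mul, abs_of_nonneg hτ]
        have := abs_sub (c₁ ^ 2 * τ - ρ) (c₂ ^ 2 * τ - ρ)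
        rw [show (c₁ ^ 2 - c₂ ^ 2) * τ = (c₁ ^ 2 * τ - ρ) - (c₂ ^ 2 * τ - ρ) by ring]
        exact this
      have h2 : min (c₁ ^ 2) g / 2 * τ ≤ g / 2 * τ :=
        mul_le_mul_of_nonneg_right (by linarith [min_le_right (c₁ ^ 2) g]) hτ
      linarith
    set θ := (c₂ ^ 2 * τ - ρ) / J with hθ
    have hθ2 : 1 ≤ (2 * K / g) ^ 2 * θ ^ 2 := by
      have h1 : 1 ≤ 2 * K / g * |θ| := by
        rw [hθ, abs_div, abs_of_pos hJ, div_mul_div_comm, le_div_iff₀ (by positivity)]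
        have e1 : 2 * K * (g / 2 * τ) ≤ 2 * K * |c₂ ^ 2 * τ - ρ| :=
          mul_le_mul_of_nonneg_left hθ1 (by linarith only [hK0])
        have e2 : g * J ≤ g * (K * τ) := mul_le_mul_of_nonneg_left hJK hg0.le
        have e3 : 2 * K * (g / 2 * τ) = g * (K * τ) := by ring
        linarith only [e1, e2, e3]
      rw [← sq_abs θ, ← mul_pow]
      exact one_le_pow₀ h1
    have h1 : 1 + τ + (ρ - c₁ ^ 2 * τ) ^ 2 ≤ J * (1 + s) := by
      have e : (ρ - c₁ ^ 2 * τ) ^ 2 = s * J := by rw [hsJ]; ring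
      have e2 : J * (1 + s) = J + s * J := by ring
      linarith only [hJd, hρ, e, e2]
    have h2 : (1 + τ) * J ≤ 8 * K / c₁ ^ 4 * ρ ^ 2 := by
      have : (c₁ ^ 2 / 2 * τ) ^ 2 ≤ ρ ^ 2 := pow_le_pow_left₀ (by positivity) hρ2 2
      have h3 : τ ^ 2 ≤ 4 / c₁ ^ 4 * ρ ^ 2 := by
        rw [div_mul_eq_mul_div, le_div_iff₀ (by positivity)]
        have e : (c₁ ^ 2 / 2 * τ) ^ 2 = τ ^ 2 * c₁ ^ 4 / 4 := by ring
        linarith only [this, e]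
      calc (1 + τ) * J ≤ (2 * τ) * (K * τ) := mul_le_mul (by linarith) hJK hJ.le (by linarith)
        _ = 2 * K * τ ^ 2 := by ring
        _ ≤ 2 * K * (4 / c₁ ^ 4 * ρ ^ 2) := mul_le_mul_of_nonneg_left h3 (by linarith)
        _ = _ := by ring
    calc (1 + τ) * (1 + τ + (ρ - c₁ ^ 2 * τ) ^ 2) ≤ (1 + τ) * (J * (1 + s)) :=
          mul_le_mul_of_nonneg_left h1 (by linarith)
      _ = ((1 + τ) * J) * 1 * (1 + s) := by ring
      _ ≤ (8 * K / c₁ ^ 4 * ρ ^ 2) * ((2 * K / g) ^ 2 * θ ^ 2) * (1 + s) := by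
          gcongr
      _ = C3 * (1 + s) * (θ ^ 2 * ρ) * ρ := by rw [hC3]; ring
      _ ≤ _ := by
          gcongr
          · linarith
          · linarith

/-! ### The energy density -/

/-- Squared radius. -/
def rho (x : Sp) : ℝ := x 0 ^ 2 + x 1 ^ 2 + x 2 ^ 2

theorem rho_nonneg (x : Sp) : 0 ≤ rho x := by unfold rho; positivity

theorem cont_rho : Continuous rho := by unfold rho; fun_prop

theorem rad_sq (x : Sp) : rad x ^ 2 = rho x := by
  unfold rad rho
  rw [Real.sq_sqrt (Finset.sum_nonneg fun _ _ => sq_nonneg _), Fin.sum_univ_three]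

theorem cont_rad : Continuous rad := by unfold rad; fun_prop

theorem cont_jb : Continuous jb := by unfold jb; fun_prop

theorem jb_sq (z : ℝ) : jb z ^ 2 = 1 + z ^ 2 := by
  unfold jb
  rw [Real.sq_sqrt (by positivity)]

theorem jb_pos (z : ℝ) : 0 < jb z := by unfold jb; positivity

theorem one_le_jb (z : ℝ) : 1 ≤ jb z := by
  unfold jb
  rw [Real.one_le_sqrt]
  linarith [sq_nonneg z]

/-- The energy density controlling everything. -/
def En (c : ℝ) (u : Pt → ℝ) (t : ℝ) (x : Sp) : ℝ :=
  ∑ a, (pd a u (Fin.cons t x)) ^ 2 + ∑ k, ∑ a, (Gam k (pd a u) (Fin.cons t x)) ^ 2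
    + (1 + t ^ 2 + rho x) * (boxc c u (Fin.cons t x)) ^ 2

theorem En_nonneg (c : ℝ) (u : Pt → ℝ) (t : ℝ) (x : Sp) : 0 ≤ En c u t x := by
  have := rho_nonneg x
  unfold En; positivity

theorem En_ge_pd (c : ℝ) (u : Pt → ℝ) (t : ℝ) (x : Sp) :
    ∑ a, (pd a u (Fin.cons t x)) ^ 2 ≤ En c u t x := by
  have := rho_nonneg x
  unfold En
  have h1 : 0 ≤ ∑ k, ∑ a, (Gam k (pd a u) (Fin.cons t x)) ^ 2 := by positivity
  have h2 : 0 ≤ (1 + t ^ 2 + rho x) * (boxc c u (Fin.cons t x)) ^ 2 := by positivity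
  linarith

theorem En_ge_gam (c : ℝ) (u : Pt → ℝ) (t : ℝ) (x : Sp) (k : Fin 8) (a : Fin 4) :
    (Gam k (pd a u) (Fin.cons t x)) ^ 2 ≤ En c u t x := by
  have := rho_nonneg x
  unfold En
  have h1 : 0 ≤ ∑ a, (pd a u (Fin.cons t x)) ^ 2 := by positivity
  have h2 : 0 ≤ (1 + t ^ 2 + rho x) * (boxc c u (Fin.cons t x)) ^ 2 := by positivity
  have h3 : (Gam k (pd a u) (Fin.cons t x)) ^ 2 ≤ ∑ a, (Gam k (pd a u) (Fin.cons t x)) ^ 2 :=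
    Finset.single_le_sum (f := fun a => (Gam k (pd a u) (Fin.cons t x)) ^ 2)
      (fun _ _ => sq_nonneg _) (Finset.mem_univ a)
  have h4 : ∑ a, (Gam k (pd a u) (Fin.cons t x)) ^ 2
      ≤ ∑ k, ∑ a, (Gam k (pd a u) (Fin.cons t x)) ^ 2 :=
    Finset.single_le_sum (f := fun k => ∑ a, (Gam k (pd a u) (Fin.cons t x)) ^ 2)
      (fun _ _ => Finset.sum_nonneg fun _ _ => sq_nonneg _) (Finset.mem_univ k)
  linarith

theorem En_ge_box (c : ℝ) (u : Pt → ℝ) (t : ℝ) (x : Sp) :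
    (1 + t ^ 2 + rho x) * (boxc c u (Fin.cons t x)) ^ 2 ≤ En c u t x := by
  have h1 : 0 ≤ ∑ k, ∑ a, (Gam k (pd a u) (Fin.cons t x)) ^ 2 := by positivity
  have h2 : 0 ≤ ∑ a, (pd a u (Fin.cons t x)) ^ 2 := by positivity
  unfold En
  linarith

theorem boxc_good (c t : ℝ) {u : Pt → ℝ} (hu : ContDiff ℝ (⊤ : ℕ∞) u) (hc : HasCompactSupport u) :
    Good (fun x => boxc c u (Fin.cons t x)) := by
  have h : ∀ a b, Good (fun x => pd a (pd b u) (Fin.cons t x)) := fun a b =>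
    good_sl t (contDiff_pd (contDiff_pd hu b) a).continuous (hcs_pd (hcs_pd hc b) a)
  have h2 : Good (fun x => pd 0 (pd 0 u) (Fin.cons t x)
      + (-c ^ 2) * ∑ j : Fin 3, pd j.succ (pd j.succ u) (Fin.cons t x)) :=
    (h 0 0).add ((Good.sum _ fun j : Fin 3 => h j.succ j.succ).mul_left continuous_const)
  convert h2 using 2
  unfold boxc; ring

theorem rpow_half_le {a Q : ℝ} (ha : 0 ≤ a) (h : a ^ ((1:ℝ)/2) ≤ Q) : a ≤ Q ^ 2 := by
  rw [← Real.sqrt_eq_rpow] at h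
  calc a = Real.sqrt a ^ 2 := (Real.sq_sqrt ha).symm
    _ ≤ Q ^ 2 := pow_le_pow_left₀ (Real.sqrt_nonneg _) h 2

theorem Qfac_eq (c : ℝ) (u : Pt → ℝ) (t : ℝ) : Qfac c u t =
    (∫ x : Sp, ∑ a, (pd a u (Fin.cons t x)) ^ 2) ^ ((1:ℝ)/2)
    + (∑ k, (∫ x : Sp, ∑ a, (Gam k (pd a u) (Fin.cons t x)) ^ 2) ^ ((1:ℝ)/2))
    + (∫ x : Sp, jb (t + rad x) ^ 2 * (boxc c u (Fin.cons t x)) ^ 2) ^ ((1:ℝ)/2) := by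
  unfold Qfac
  rw [Finset.sum_range_succ, Finset.sum_range_one]
  congr 2
  · rw [Fintype.sum_unique]
    rfl

theorem Qfac_parts (c : ℝ) (u : Pt → ℝ) (t : ℝ) : 0 ≤ Qfac c u t ∧
    ∫ x : Sp, ∑ a, (pd a u (Fin.cons t x)) ^ 2 ≤ Qfac c u t ^ 2 ∧
    (∀ k, ∫ x : Sp, ∑ a, (Gam k (pd a u) (Fin.cons t x)) ^ 2 ≤ Qfac c u t ^ 2) ∧
    ∫ x : Sp, jb (t + rad x) ^ 2 * (boxc c u (Fin.cons t x)) ^ 2 ≤ Qfac c u t ^ 2 := by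
  have i1 : 0 ≤ ∫ x : Sp, ∑ a, (pd a u (Fin.cons t x)) ^ 2 :=
    integral_nonneg fun x => by positivity
  have i2 : ∀ k, 0 ≤ ∫ x : Sp, ∑ a, (Gam k (pd a u) (Fin.cons t x)) ^ 2 :=
    fun k => integral_nonneg fun x => by positivity
  have i3 : 0 ≤ ∫ x : Sp, jb (t + rad x) ^ 2 * (boxc c u (Fin.cons t x)) ^ 2 :=
    integral_nonneg fun x => by positivity
  have j1 := Real.rpow_nonneg i1 ((1:ℝ)/2)
  have j2 : ∀ k, 0 ≤ (∫ x : Sp, ∑ a, (Gam k (pd a u) (Fin.cons t x)) ^ 2) ^ ((1:ℝ)/2) :=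
    fun k => Real.rpow_nonneg (i2 k) _
  have j3 := Real.rpow_nonneg i3 ((1:ℝ)/2)
  have j4 := Finset.sum_nonneg (s := Finset.univ) (fun k _ => j2 k)
  rw [Qfac_eq]
  refine ⟨by linarith, rpow_half_le i1 (by linarith), fun k => rpow_half_le (i2 k) ?_,
    rpow_half_le i3 (by linarith)⟩
  have := Finset.single_le_sum (f := fun k => (∫ x : Sp, ∑ a,
    (Gam k (pd a u) (Fin.cons t x)) ^ 2) ^ ((1:ℝ)/2)) (fun k _ => j2 k) (Finset.mem_univ k)
  linarith

theorem En_int (c : ℝ) {u : Pt → ℝ} (hu : ContDiff ℝ (⊤ : ℕ∞) u) (hc : HasCompactSupport u)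
    (t : ℝ) (ht : 0 ≤ t) :
    Integrable (En c u t) ∧ ∫ x, En c u t x ≤ 10 * Qfac c u t ^ 2 := by
  have g1 : Good (fun x => ∑ a, (pd a u (Fin.cons t x)) ^ 2) :=
    Good.sum _ fun a => (good_sl t (contDiff_pd hu a).continuous (hcs_pd hc a)).sq
  have g2 : ∀ k, Good (fun x => ∑ a, (Gam k (pd a u) (Fin.cons t x)) ^ 2) := fun k =>
    Good.sum _ fun a => (good_sl t (cont_gam (contDiff_pd hu a) k) (hcs_gam (hcs_pd hc a) k)).sq
  have g2' : Good (fun x => ∑ k, ∑ a, (Gam k (pd a u) (Fin.cons t x)) ^ 2) := Good.sum _ g2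
  have cr := cont_rho
  have cr' := cont_rad
  have cj := cont_jb
  have g3 : Good (fun x => (1 + t ^ 2 + rho x) * (boxc c u (Fin.cons t x)) ^ 2) :=
    (boxc_good c t hu hc).sq.mul_left (by fun_prop)
  have g4 : Good (fun x => jb (t + rad x) ^ 2 * (boxc c u (Fin.cons t x)) ^ 2) :=
    (boxc_good c t hu hc).sq.mul_left (by fun_prop)
  obtain ⟨-, q1, q2, q3⟩ := Qfac_parts c u t
  refine ⟨((g1.add g2').add g3).integrable, ?_⟩
  have e : ∫ x, En c u t x = (∫ x : Sp, ∑ a, (pd a u (Fin.cons t x)) ^ 2)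
      + (∑ k, ∫ x : Sp, ∑ a, (Gam k (pd a u) (Fin.cons t x)) ^ 2)
      + ∫ x, (1 + t ^ 2 + rho x) * (boxc c u (Fin.cons t x)) ^ 2 := by
    unfold En
    rw [integral_add (g1.add g2').integrable g3.integrable,
      integral_add g1.integrable g2'.integrable, integral_finsetSum _ (fun k _ => (g2 k).integrable)]
  have h3 : ∫ x, (1 + t ^ 2 + rho x) * (boxc c u (Fin.cons t x)) ^ 2 ≤
      ∫ x : Sp, jb (t + rad x) ^ 2 * (boxc c u (Fin.cons t x)) ^ 2 := by
    refine integral_mono g3.integrable g4.integrable (fun x => ?_)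
    refine mul_le_mul_of_nonneg_right ?_ (sq_nonneg _)
    rw [jb_sq, ← rad_sq]
    have : 0 ≤ rad x := Real.sqrt_nonneg _
    nlinarith [mul_nonneg ht this]
  have h2 : ∑ k, ∫ x : Sp, ∑ a, (Gam k (pd a u) (Fin.cons t x)) ^ 2 ≤ 8 * Qfac c u t ^ 2 := by
    refine (Finset.sum_le_sum (fun k _ => q2 k)).trans ?_
    simp
  rw [e]; linarith

/-- The weight `σ² = (c²t²-r²)²/(1+t²+r²)`. -/
def sw (c t : ℝ) (x : Sp) : ℝ := (c ^ 2 * t ^ 2 - rho x) ^ 2 / (1 + t ^ 2 + rho x)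

theorem Jpos (t : ℝ) (x : Sp) : 0 < 1 + t ^ 2 + rho x := by
  have := rho_nonneg x
  positivity

theorem sw_nonneg (c t : ℝ) (x : Sp) : 0 ≤ sw c t x :=
  div_nonneg (sq_nonneg _) (Jpos t x).le

theorem abs_theta_le (c t : ℝ) (x : Sp) :
    |(c ^ 2 * t ^ 2 - rho x) / (1 + t ^ 2 + rho x)| ≤ c ^ 2 + 1 := by
  have h := Jpos t x
  have h2 := rho_nonneg x
  rw [abs_div, abs_of_pos h, div_le_iff₀ h, abs_le]
  constructor <;> nlinarith [sq_nonneg c, sq_nonneg t, mul_nonneg (sq_nonneg c) h2,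
    mul_nonneg (sq_nonneg c) (sq_nonneg t)]

theorem sw_le (c t : ℝ) (x : Sp) : sw c t x ≤ (c ^ 2 + 1) ^ 2 * (1 + t ^ 2 + rho x) := by
  have h := Jpos t x
  have h1 := pow_le_pow_left₀ (abs_nonneg _) (abs_theta_le c t x) 2
  rw [sq_abs] at h1
  have h2 := mul_le_mul_of_nonneg_right h1 h.le
  refine le_trans (le_of_eq ?_) h2
  unfold sw
  field_simp

/-- Pointwise Klainerman-Sideris bounds. -/
theorem ks_pointwise (c t : ℝ) {u : Pt → ℝ} (hu : ContDiff ℝ (⊤ : ℕ∞) u) (x : Sp) :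
    sw c t x * (∑ j : Fin 3, pd j.succ (pd j.succ u) (Fin.cons t x)) ^ 2 ≤ 121 * En c u t x ∧
    sw c t x * (∑ a, (pd 0 (pd a u) (Fin.cons t x)) ^ 2)
      ≤ 10000 * (c ^ 2 + 1) ^ 2 * En c u t x := by
  have G := En_ge_gam c u t x
  have hf := En_ge_box c u t x
  have e1 : (Fin.cons t x : Pt) 1 = x 0 := rfl
  have e2 : (Fin.cons t x : Pt) 2 = x 1 := rfl
  have e3 : (Fin.cons t x : Pt) 3 = x 2 := rfl
  have g4 : ∀ a, Gam 4 (pd a u) = rot 1 2 (pd a u) := fun a => rfl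
  have g5 : ∀ a, Gam 5 (pd a u) = rot 1 3 (pd a u) := fun a => rfl
  have g6 : ∀ a, Gam 6 (pd a u) = rot 2 3 (pd a u) := fun a => rfl
  have g7 : ∀ a, Gam 7 (pd a u) = scal (pd a u) := fun a => rfl
  have g0 : ∀ a, Gam 0 (pd a u) = pd 0 (pd a u) := fun a => rfl
  have s1 : (0 : Fin 3).succ = (1 : Fin 4) := rfl
  have s2 : (1 : Fin 3).succ = (2 : Fin 4) := rfl
  have s3 : (2 : Fin 3).succ = (3 : Fin 4) := rfl
  have h70 := G 7 0
  have h71 := G 7 1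
  have h72 := G 7 2
  have h73 := G 7 3
  have h40 := G 4 0
  have h41 := G 4 1
  have h42 := G 4 2
  have h50 := G 5 0
  have h51 := G 5 1
  have h53 := G 5 3
  have h60 := G 6 0
  have h62 := G 6 2
  have h63 := G 6 3
  have h01 := G 0 1
  have h02 := G 0 2
  have h03 := G 0 3
  simp only [g4, g5, g6, g7, g0, rot, scal, boxc, rho, Fin.sum_univ_four, Fin.sum_univ_three,
    Fin.cons_zero, e1, e2, e3, s1, s2, s3,
    pd_comm hu 1 0, pd_comm hu 2 0, pd_comm hu 3 0, pd_comm hu 2 1, pd_comm hu 3 1,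
    pd_comm hu 3 2] at h70 h71 h72 h73 h40 h41 h42 h50 h51 h53 h60 h62 h63 h01 h02 h03 hf
  have hl := alg_lap c t (x 0) (x 1) (x 2) _ _ _ _ _ _ _ _ _ _ _
    h70 h71 h72 h73 h41 h42 h51 h53 h62 h63 hf
  have hl' : sw c t x * (pd 1 (pd 1 u) (Fin.cons t x) + pd 2 (pd 2 u) (Fin.cons t x)
    + pd 3 (pd 3 u) (Fin.cons t x)) ^ 2 ≤ 121 * En c u t x := hl
  simp only [Fin.sum_univ_four, Fin.sum_univ_three, s1, s2, s3]
  refine ⟨hl', ?_⟩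
  exact alg_time c t (x 0) (x 1) (x 2) _ _ _ _ _ _ _ _ _ _ _
    h70 h71 h72 h73 h40 h41 h42 h50 h51 h53 h60 h62 h63 h01 h02 h03 hf
    (sw c t x) _ rfl (sw_nonneg c t x) (sw_le c t x) hl'

/-! ### Integration by parts -/

theorem sd_mul {f g : Sp → ℝ} (i : Fin 3) (x : Sp) (hf : DifferentiableAt ℝ f x)
    (hg : DifferentiableAt ℝ g x) :
    sd i (fun y => f y * g y) x = sd i f x * g x + f x * sd i g x := by
  unfold sd
  rw [fderiv_fun_mul hf hg]
  simp
  ring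

theorem sd_sub {f g : Sp → ℝ} (i : Fin 3) (x : Sp) (hf : DifferentiableAt ℝ f x)
    (hg : DifferentiableAt ℝ g x) :
    sd i (fun y => f y - g y) x = sd i f x - sd i g x := by
  unfold sd
  rw [fderiv_fun_sub hf hg]
  simp

theorem sd_sum {f : Fin 3 → Sp → ℝ} (i : Fin 3) (x : Sp)
    (hf : ∀ j, DifferentiableAt ℝ (f j) x) :
    sd i (fun y => ∑ j, f j y) x = ∑ j, sd i (f j) x := by
  unfold sd
  rw [fderiv_fun_sum (fun j _ => hf j)]
  simp

theorem sd_coord (i : Fin 3) (x : Sp) : sd i (fun y => y i) x = 1 := by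
  unfold sd
  rw [(hasFDerivAt_apply i x).fderiv]
  simp

theorem contDiff_rho {n : WithTop ℕ∞} : ContDiff ℝ n rho := by unfold rho; fun_prop

theorem sd_rho (i : Fin 3) (x : Sp) : sd i rho x = 2 * x i := by
  have h : ∀ j : Fin 3, HasFDerivAt (fun y : Sp => y j ^ 2)
      ((2 * x j) • (ContinuousLinearMap.proj j : Sp →L[ℝ] ℝ)) x := by
    intro j
    have := (hasFDerivAt_apply (𝕜 := ℝ) j x).pow 2
    simpa using this
  have h3 := ((h 0).add (h 1)).add (h 2)
  have e : fderiv ℝ rho x = _ := h3.fderiv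
  unfold sd
  rw [e]
  fin_cases i <;> simp

theorem sd_comp_rho {φ : ℝ → ℝ} {d : ℝ} (i : Fin 3) (x : Sp) (h : HasDerivAt φ d (rho x)) :
    sd i (fun y => φ (rho y)) x = d * (2 * x i) := by
  have hr : HasFDerivAt rho (fderiv ℝ rho x) x :=
    ((contDiff_rho (n := 1)).differentiable (by simp) x).hasFDerivAt
  have := (h.comp_hasFDerivAt x hr).fderiv
  rw [← sd_rho]
  unfold sd
  change fderiv ℝ (φ ∘ rho) x _ = _
  rw [this]
  simp

theorem contDiff_sw (c t : ℝ) {n : WithTop ℕ∞} : ContDiff ℝ n (sw c t) := by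
  unfold sw
  have := contDiff_rho (n := n)
  exact ContDiff.div (by fun_prop) (by fun_prop) (fun x => (Jpos t x).ne')

/-- The gradient factor of the weight. -/
def swd (c t : ℝ) (x : Sp) : ℝ :=
  -(2 * ((c ^ 2 * t ^ 2 - rho x) / (1 + t ^ 2 + rho x)) +
    ((c ^ 2 * t ^ 2 - rho x) / (1 + t ^ 2 + rho x)) ^ 2)

theorem sd_sw (c t : ℝ) (i : Fin 3) (x : Sp) : sd i (sw c t) x = swd c t x * (2 * x i) := by
  refine sd_comp_rho (φ := fun r => (c ^ 2 * t ^ 2 - r) ^ 2 / (1 + t ^ 2 + r)) i x ?_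
  have hJ := Jpos t x
  have h1 : HasDerivAt (fun r => (c ^ 2 * t ^ 2 - r) ^ 2) (2 * (c ^ 2 * t ^ 2 - rho x) * (-1))
      (rho x) := by
    have := ((hasDerivAt_id (rho x)).const_sub (c ^ 2 * t ^ 2)).fun_pow 2
    simpa using this
  have h2 : HasDerivAt (fun r => 1 + t ^ 2 + r) 1 (rho x) :=
    (hasDerivAt_id (rho x)).const_add _
  refine (h1.fun_div h2 hJ.ne').congr_deriv ?_
  unfold swd
  field_simp
  ring

theorem swd_bound (c t : ℝ) (x : Sp) (i : Fin 3) :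
    (swd c t x * (2 * x i)) ^ 2 ≤ 4 * (c ^ 2 + 3) ^ 2 * sw c t x := by
  have hJ := Jpos t x
  have hθ := abs_theta_le c t x
  set θ := (c ^ 2 * t ^ 2 - rho x) / (1 + t ^ 2 + rho x) with hθd
  have hs : sw c t x = θ ^ 2 * (1 + t ^ 2 + rho x) := by
    rw [hθd]; unfold sw; field_simp
  have hx : x i ^ 2 ≤ 1 + t ^ 2 + rho x := by
    unfold rho
    obtain ⟨-, q1, q2, q3, -⟩ := sq_le_J t (x 0) (x 1) (x 2)
    fin_cases i
    · exact q1
    · exact q2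
    · exact q3
  have e : (swd c t x * (2 * x i)) ^ 2 = 4 * (2 + θ) ^ 2 * θ ^ 2 * x i ^ 2 := by
    unfold swd; rw [← hθd]; ring
  have h2 : (2 + θ) ^ 2 ≤ (c ^ 2 + 3) ^ 2 := by
    have := abs_le.1 hθ
    refine sq_le_sq' ?_ ?_ <;> linarith [sq_nonneg c]
  rw [e, hs]
  calc 4 * (2 + θ) ^ 2 * θ ^ 2 * x i ^ 2
      ≤ 4 * (c ^ 2 + 3) ^ 2 * θ ^ 2 * (1 + t ^ 2 + rho x) := by gcongr
    _ = _ := by ring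

/-- Algebra for the Hessian estimate. -/
theorem hess_alg (s L k D : ℝ) (g p : Fin 3 → ℝ) (h : Fin 3 → Fin 3 → ℝ) (hs : 0 ≤ s)
    (hk : 0 < k) (hg : ∀ i, g i ^ 2 ≤ k * s)
    (hD : D = ∑ i, (g i * ((∑ j, p j * h i j) - p i * L) + s * ((∑ j, h i j ^ 2) - h i i * L)))
    (hL : L = ∑ i, h i i) :
    s * ∑ i, ∑ j, h i j ^ 2 ≤ 2 * D + 8 * (s * L ^ 2) + 10 * k * ∑ j, p j ^ 2 := by
  have e1 : D = ∑ i, ∑ j, g i * p j * h i j - ∑ i, g i * p i * L + s * ∑ i, ∑ j, h i j ^ 2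
      - s * L ^ 2 := by
    have : s * L ^ 2 = ∑ i, s * (h i i * L) := by
      rw [← Finset.mul_sum, ← Finset.sum_mul, ← hL]; ring
    rw [hD, this, Finset.mul_sum, ← Finset.sum_sub_distrib, ← Finset.sum_add_distrib,
      ← Finset.sum_sub_distrib]
    refine Finset.sum_congr rfl fun i _ => ?_
    rw [mul_sub, Finset.mul_sum]
    simp only [mul_assoc]
    ring
  have b1 : ∀ i j, -(g i * p j * h i j) ≤ s * h i j ^ 2 / 4 + k * p j ^ 2 := by
    intro i j
    have h1 : 0 ≤ (g i * h i j / (2 * k) + p j) ^ 2 := sq_nonneg _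
    have h2 : (g i * h i j / (2 * k) + p j) ^ 2 * k = g i ^ 2 * h i j ^ 2 / (4 * k)
      + g i * p j * h i j + k * p j ^ 2 := by field_simp; ring
    have h3 : g i ^ 2 * h i j ^ 2 / (4 * k) ≤ s * h i j ^ 2 / 4 := by
      rw [div_le_div_iff₀ (by positivity) (by norm_num)]
      have := mul_le_mul_of_nonneg_right (hg i) (sq_nonneg (h i j))
      nlinarith
    have h4 := mul_nonneg h1 hk.le
    linarith
  have b2 : ∀ i, g i * p i * L ≤ s * L ^ 2 + k * p i ^ 2 := by
    intro i
    have h1 : 0 ≤ (g i * L / (2 * k) - p i) ^ 2 := sq_nonneg _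
    have h2 : (g i * L / (2 * k) - p i) ^ 2 * k = g i ^ 2 * L ^ 2 / (4 * k)
      - g i * p i * L + k * p i ^ 2 := by field_simp; ring
    have h3 : g i ^ 2 * L ^ 2 / (4 * k) ≤ s * L ^ 2 := by
      rw [div_le_iff₀ (by positivity)]
      have := mul_le_mul_of_nonneg_right (hg i) (sq_nonneg L)
      nlinarith [mul_nonneg (mul_nonneg hk.le hs) (sq_nonneg L)]
    have h4 := mul_nonneg h1 hk.le
    linarith
  have c1 : -(∑ i, ∑ j, g i * p j * h i j) ≤ (s * ∑ i, ∑ j, h i j ^ 2) / 4 + 3 * k * ∑ j, p j ^ 2 := by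
    have : ∑ i, ∑ j, -(g i * p j * h i j) ≤ ∑ i, ∑ j, (s * h i j ^ 2 / 4 + k * p j ^ 2) :=
      Finset.sum_le_sum fun i _ => Finset.sum_le_sum fun j _ => b1 i j
    simp only [Fin.sum_univ_three] at this ⊢
    linarith
  have c2 : ∑ i, g i * p i * L ≤ 3 * (s * L ^ 2) + k * ∑ j, p j ^ 2 := by
    have := Finset.sum_le_sum (s := Finset.univ) fun i _ => b2 i
    simp only [Fin.sum_univ_three] at this ⊢
    linarith
  have c3 : 0 ≤ s * ∑ i, ∑ j, h i j ^ 2 := by positivity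
  have c4 : 0 ≤ s * L ^ 2 := by positivity
  have c5 : 0 ≤ k * ∑ j, p j ^ 2 := by positivity
  linarith

/-- Weighted Hessian estimate, divergence form. -/
theorem hess_div (c t : ℝ) {u : Pt → ℝ} (hu : ContDiff ℝ (⊤ : ℕ∞) u) (hc : HasCompactSupport u) :
    ∃ D : Sp → ℝ, Integrable D ∧ ∫ x, D x = 0 ∧ ∀ x,
      sw c t x * ∑ i : Fin 3, ∑ j : Fin 3, (pd i.succ (pd j.succ u) (Fin.cons t x)) ^ 2
      ≤ 2 * D x + 8 * (sw c t x * (∑ j : Fin 3, pd j.succ (pd j.succ u) (Fin.cons t x)) ^ 2)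
        + 40 * (c ^ 2 + 3) ^ 2 * ∑ j : Fin 3, (pd j.succ u (Fin.cons t x)) ^ 2 := by
  have hp : ∀ j : Fin 3, ContDiff ℝ (⊤ : ℕ∞) (pd j.succ u) := fun j => contDiff_pd hu _
  have hh : ∀ i j : Fin 3, ContDiff ℝ (⊤ : ℕ∞) (pd i.succ (pd j.succ u)) :=
    fun i j => contDiff_pd (hp j) _
  have P1 : ∀ j : Fin 3, ContDiff ℝ 1 (sl t (pd j.succ u)) :=
    fun j => contDiff_sl t ((hp j).of_le (by simp))
  have H1 : ∀ i j : Fin 3, ContDiff ℝ 1 (sl t (pd i.succ (pd j.succ u))) :=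
    fun i j => contDiff_sl t ((hh i j).of_le (by simp))
  have Pd : ∀ (j : Fin 3) x, DifferentiableAt ℝ (sl t (pd j.succ u)) x :=
    fun j x => (P1 j).differentiable (by simp) x
  have Hd : ∀ (i j : Fin 3) x, DifferentiableAt ℝ (sl t (pd i.succ (pd j.succ u))) x :=
    fun i j x => (H1 i j).differentiable (by simp) x
  have hsw := contDiff_sw c t (n := 1)
  let F : Fin 3 → Sp → ℝ := fun i y => sw c t y *
    ((∑ j : Fin 3, sl t (pd j.succ u) y * sl t (pd i.succ (pd j.succ u)) y)
      - sl t (pd i.succ u) y * ∑ j : Fin 3, sl t (pd j.succ (pd j.succ u)) y)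
  have F1 : ∀ i, ContDiff ℝ 1 (F i) := by
    intro i
    refine hsw.mul (ContDiff.sub (ContDiff.sum fun j _ => (P1 j).mul (H1 i j))
      ((P1 i).mul (ContDiff.sum fun j _ => H1 j j)))
  have Fc : ∀ i, HasCompactSupport (F i) := by
    intro i
    have gp : ∀ j : Fin 3, Good (sl t (pd j.succ u)) :=
      fun j => ⟨(P1 j).continuous, hcs_sl t (hcs_pd hc _)⟩
    have g1 : Good (fun y => ∑ j : Fin 3, sl t (pd j.succ u) y * sl t (pd i.succ (pd j.succ u)) y) :=
      Good.sum _ fun j => (gp j).mul_right (H1 i j).continuous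
    have g2 : Good (fun y => sl t (pd i.succ u) y * ∑ j : Fin 3, sl t (pd j.succ (pd j.succ u)) y) :=
      (gp i).mul_right (continuous_finsetSum _ fun j _ => (H1 j j).continuous)
    have g3 := (g1.add (g2.mul_left (continuous_const (y := (-1 : ℝ))))).mul_left hsw.continuous
    convert g3.2 using 2
    ring
  have FI := fun i => int_sd (F1 i) (Fc i) i
  refine ⟨fun x => ∑ i, sd i (F i) x, integrable_finsetSum _ fun i _ => (FI i).1, ?_, ?_⟩
  · rw [integral_finsetSum _ fun i _ => (FI i).1]
    simp [(FI _).2]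
  intro x
  have hk := hess_alg (sw c t x) (∑ j : Fin 3, pd j.succ (pd j.succ u) (Fin.cons t x))
    (4 * (c ^ 2 + 3) ^ 2) (∑ i, sd i (F i) x) (fun i => sd i (sw c t) x)
    (fun j => pd j.succ u (Fin.cons t x)) (fun i j => pd i.succ (pd j.succ u) (Fin.cons t x))
    (sw_nonneg c t x) (by positivity) (fun i => by rw [sd_sw]; exact swd_bound c t x i) ?_ rfl
  · refine hk.trans (le_of_eq ?_)
    ring
  -- the divergence computation
  have dp : ∀ i j : Fin 3, sd i (sl t (pd j.succ u)) x = pd i.succ (pd j.succ u) (Fin.cons t x) := by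
    intro i j
    rw [sd_sl t ((hp j).differentiable (by simp))]
    rfl
  have dh : ∀ i k j : Fin 3, sd i (sl t (pd k.succ (pd j.succ u))) x
      = pd i.succ (pd k.succ (pd j.succ u)) (Fin.cons t x) := by
    intro i k j
    rw [sd_sl t ((hh k j).differentiable (by simp))]
    rfl
  have sF : ∀ i, sd i (F i) x = sd i (sw c t) x *
      ((∑ j : Fin 3, pd j.succ u (Fin.cons t x) * pd i.succ (pd j.succ u) (Fin.cons t x))
        - pd i.succ u (Fin.cons t x) * ∑ j : Fin 3, pd j.succ (pd j.succ u) (Fin.cons t x))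
      + sw c t x * ((∑ j : Fin 3, pd i.succ (pd j.succ u) (Fin.cons t x) ^ 2)
        - pd i.succ (pd i.succ u) (Fin.cons t x)
          * ∑ j : Fin 3, pd j.succ (pd j.succ u) (Fin.cons t x))
      + sw c t x * ((∑ j : Fin 3, pd j.succ u (Fin.cons t x) *
          pd i.succ (pd i.succ (pd j.succ u)) (Fin.cons t x))
        - ∑ j : Fin 3, pd i.succ u (Fin.cons t x) *
          pd i.succ (pd j.succ (pd j.succ u)) (Fin.cons t x)) := by
    intro i
    have dsum1 : DifferentiableAt ℝ (fun y => ∑ j : Fin 3,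
        sl t (pd j.succ u) y * sl t (pd i.succ (pd j.succ u)) y) x :=
      DifferentiableAt.fun_sum fun j _ => (Pd j x).mul (Hd i j x)
    have dsum2 : DifferentiableAt ℝ (fun y => ∑ j : Fin 3, sl t (pd j.succ (pd j.succ u)) y) x :=
      DifferentiableAt.fun_sum fun j _ => Hd j j x
    simp only [F]
    rw [sd_mul i x (hsw.differentiable (by simp) x) (dsum1.fun_sub ((Pd i x).fun_mul dsum2)),
      sd_sub i x dsum1 ((Pd i x).fun_mul dsum2), sd_mul i x (Pd i x) dsum2,
      sd_sum i x (fun j => Hd j j x), sd_sum i x (fun j => (Pd j x).fun_mul (Hd i j x))]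
    simp only [sd_mul i x (Pd _ x) (Hd i _ x), dp, dh]
    simp only [sl, Fin.sum_univ_three]
    ring
  have hT : ∑ i : Fin 3, ∑ j : Fin 3, pd j.succ u (Fin.cons t x) *
        pd i.succ (pd i.succ (pd j.succ u)) (Fin.cons t x)
      = ∑ i : Fin 3, ∑ j : Fin 3, pd i.succ u (Fin.cons t x) *
          pd i.succ (pd j.succ (pd j.succ u)) (Fin.cons t x) := by
    rw [Finset.sum_comm]
    refine Finset.sum_congr rfl fun i _ => Finset.sum_congr rfl fun j _ => ?_
    rw [pd_comm hu j.succ i.succ, pd_comm (hp j) j.succ i.succ]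
  rw [Finset.sum_congr rfl fun i _ => sF i, Finset.sum_add_distrib, ← Finset.mul_sum,
    Finset.sum_sub_distrib, hT, sub_self, mul_zero, add_zero]

/-- The integrated weighted Hessian estimate for all second derivatives. -/
theorem ks_int (c : ℝ) : ∃ C : ℝ, 0 < C ∧ ∀ (u : Pt → ℝ), ContDiff ℝ (⊤ : ℕ∞) u →
    HasCompactSupport u → ∀ t : ℝ, 0 ≤ t →
    ∫ x, (1 + sw c t x) * ∑ a, ∑ b, (pd a (pd b u) (Fin.cons t x)) ^ 2 ≤ C * Qfac c u t ^ 2 := by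
  set K : ℝ := 16 + 2 * (10000 * (c ^ 2 + 1) ^ 2) + 968 + 40 * (c ^ 2 + 3) ^ 2 with hK
  have hK0 : 0 < K := by positivity
  refine ⟨10 * K, by positivity, ?_⟩
  intro u hu hc t ht
  obtain ⟨D, hD1, hD2, hD3⟩ := hess_div c t hu hc
  obtain ⟨hE1, hE2⟩ := En_int c hu hc t ht
  have hpt : ∀ x, (1 + sw c t x) * ∑ a, ∑ b, (pd a (pd b u) (Fin.cons t x)) ^ 2
      ≤ 2 * D x + K * En c u t x := by
    intro x
    obtain ⟨k1, k2⟩ := ks_pointwise c t hu x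
    have k3 := hD3 x
    have hs := sw_nonneg c t x
    have hEn := En_nonneg c u t x
    have g : ∀ a b, (pd a (pd b u) (Fin.cons t x)) ^ 2 ≤ En c u t x := by
      intro a b
      refine le_trans (le_of_eq ?_) (En_ge_gam c u t x (Fin.castLE (by norm_num) a) b)
      fin_cases a <;> rfl
    have g1 : ∑ a, ∑ b, (pd a (pd b u) (Fin.cons t x)) ^ 2 ≤ 16 * En c u t x := by
      refine (Finset.sum_le_sum fun a _ => Finset.sum_le_sum fun b _ => g a b).trans ?_
      simp
      linarith
    have g2 : ∑ j : Fin 3, (pd j.succ u (Fin.cons t x)) ^ 2 ≤ En c u t x := by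
      refine le_trans ?_ (En_ge_pd c u t x)
      rw [Fin.sum_univ_succ (n := 3)]
      linarith [sq_nonneg (pd 0 u (Fin.cons t x))]
    have g3 : ∑ a, ∑ b, (pd a (pd b u) (Fin.cons t x)) ^ 2
        ≤ 2 * ∑ a, (pd 0 (pd a u) (Fin.cons t x)) ^ 2
        + ∑ i : Fin 3, ∑ j : Fin 3, (pd i.succ (pd j.succ u) (Fin.cons t x)) ^ 2 := by
      simp only [Fin.sum_univ_succ (n := 3), pd_comm hu (Fin.succ _) 0, Finset.sum_add_distrib]
      have := sq_nonneg (pd 0 (pd 0 u) (Fin.cons t x))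
      linarith
    have g4 := mul_le_mul_of_nonneg_left g3 hs
    have g5 : 40 * (c ^ 2 + 3) ^ 2 * ∑ j : Fin 3, (pd j.succ u (Fin.cons t x)) ^ 2
      ≤ 40 * (c ^ 2 + 3) ^ 2 * En c u t x := mul_le_mul_of_nonneg_left g2 (by positivity)
    rw [mul_add] at g4
    rw [hK, add_mul, one_mul]
    nlinarith
  have gh : Good (fun x => (1 + sw c t x) * ∑ a, ∑ b, (pd a (pd b u) (Fin.cons t x)) ^ 2) := by
    refine Good.mul_left (Good.sum _ fun a => Good.sum _ fun b => Good.sq ?_)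
      (continuous_const.add (contDiff_sw c t (n := 1)).continuous)
    exact good_sl t (contDiff_pd (contDiff_pd hu b) a).continuous (hcs_pd (hcs_pd hc b) a)
  have h := integral_mono gh.integrable ((hD1.const_mul 2).add (hE1.const_mul K)) hpt
  have e : ∫ x, ((fun x => 2 * D x) + fun x => K * En c u t x) x
      = K * ∫ x, En c u t x := by
    have := integral_add (hD1.const_mul 2) (hE1.const_mul K)
    simp only [Pi.add_apply]
    rw [this, integral_const_mul, integral_const_mul, hD2]; ring
  rw [e] at h
  refine h.trans ?_
  have := mul_le_mul_of_nonneg_left hE2 hK0.le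
  linarith

/-! ### The Morawetz-type estimate away from the cone of `v` -/

theorem abs_arctan_le (z : ℝ) : |Real.arctan z| ≤ 2 := by
  have h1 := Real.arctan_lt_pi_div_two z
  have h2 := Real.neg_pi_div_two_lt_arctan z
  have h3 := Real.pi_lt_four
  rw [abs_le]; constructor <;> linarith

theorem mor_alg (T J ρ θ α w q s W k κ D : ℝ) (hT : 0 < T) (hJ : 0 < J) (hρ : 0 ≤ ρ) (hρJ : ρ ≤ J)
    (hθ : |θ| ≤ k) (hα : |α| ≤ 2) (hq : θ ^ 2 * q ^ 2 ≤ s * W)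
    (hD : D = 2 * ρ * ((2 * θ * (-(1 + θ) / J) * α) / T + θ ^ 2 * κ) * w ^ 2
      + 2 * (θ ^ 2 * α / T) * w * q + 3 * (θ ^ 2 * α / T) * w ^ 2) :
    2 * (θ ^ 2 * ρ * κ) * w ^ 2 ≤ D + (8 * k * (1 + k) + 8 * k ^ 2 + 2) / T * (w ^ 2 + s * W) := by
  have hk : 0 ≤ k := (abs_nonneg _).trans hθ
  set lam : ℝ := ρ / J * (θ * (1 + θ) * α) with hl
  have hr : |ρ / J| ≤ 1 := by
    rw [abs_of_nonneg (by positivity), div_le_one hJ]; exact hρJ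
  have hθ1 : |1 + θ| ≤ 1 + k := by
    refine (abs_add_le _ _).trans ?_
    rw [abs_one]; linarith
  have b1 : |lam| ≤ 2 * k * (1 + k) := by
    rw [hl, abs_mul, abs_mul, abs_mul]
    calc |ρ / J| * (|θ| * |1 + θ| * |α|) ≤ 1 * (k * (1 + k) * 2) := by gcongr
      _ = _ := by ring
  have hθ2 : θ ^ 2 ≤ k ^ 2 := by rw [← sq_abs]; exact pow_le_pow_left₀ (abs_nonneg _) hθ 2
  have hα2 := abs_le.1 hα
  have c1 : 4 * lam * w ^ 2 ≤ 8 * k * (1 + k) * w ^ 2 :=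
    mul_le_mul_of_nonneg_right (by linarith [(abs_le.1 b1).2]) (sq_nonneg _)
  have c2 : -(3 * (θ ^ 2 * α) * w ^ 2) ≤ 6 * k ^ 2 * w ^ 2 := by
    have : -(3 * (θ ^ 2 * α)) ≤ 6 * k ^ 2 := by nlinarith [sq_nonneg θ]
    have := mul_le_mul_of_nonneg_right this (sq_nonneg w)
    linarith
  have c3 : -(2 * (θ ^ 2 * α) * w * q) ≤ 2 * k ^ 2 * w ^ 2 + 2 * (s * W) := by
    have e1 : -(α * (w * q)) ≤ w ^ 2 + q ^ 2 := by
      have : |α * (w * q)| ≤ 2 * |w * q| := by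
        rw [abs_mul]; exact mul_le_mul_of_nonneg_right hα (abs_nonneg _)
      have h2 : 2 * |w * q| ≤ w ^ 2 + q ^ 2 := by
        rw [abs_mul, ← sq_abs w, ← sq_abs q]
        linarith [two_mul_le_add_sq |w| |q|]
      linarith [neg_abs_le (α * (w * q))]
    have e2 := mul_le_mul_of_nonneg_left e1 (sq_nonneg θ)
    have e3 : θ ^ 2 * w ^ 2 ≤ k ^ 2 * w ^ 2 := mul_le_mul_of_nonneg_right hθ2 (sq_nonneg _)
    linarith
  have hsW : 0 ≤ s * W := le_trans (by positivity) hq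
  have e : 2 * (θ ^ 2 * ρ * κ) * w ^ 2 - D
      = (4 * lam * w ^ 2 - 3 * (θ ^ 2 * α) * w ^ 2 - 2 * (θ ^ 2 * α) * w * q) / T := by
    rw [hD, hl]; field_simp; ring
  have fin : (4 * lam * w ^ 2 - 3 * (θ ^ 2 * α) * w ^ 2 - 2 * (θ ^ 2 * α) * w * q) / T ≤
      (8 * k * (1 + k) + 8 * k ^ 2 + 2) / T * (w ^ 2 + s * W) := by
    rw [div_mul_eq_mul_div]
    refine div_le_div_of_nonneg_right ?_ hT.le
    have p1 : 0 ≤ (8 * k * (1 + k) + 8 * k ^ 2) * (s * W) := by positivity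
    have p2 := sq_nonneg w
    linarith
  linarith

/-- The ratio `θ = (c²t²-r²)/(1+t²+r²)`. -/
def th (c t : ℝ) (x : Sp) : ℝ := (c ^ 2 * t ^ 2 - rho x) / (1 + t ^ 2 + rho x)

/-- The Morawetz weight. -/
def mw (c₁ c₂ t : ℝ) (x : Sp) : ℝ :=
  th c₂ t x ^ 2 * rho x * (1 / (jb t ^ 2 + (rho x - c₁ ^ 2 * t ^ 2) ^ 2))

theorem cont_th (c t : ℝ) : Continuous (th c t) := by
  unfold th
  have := cont_rho
  exact Continuous.div (by fun_prop) (by fun_prop) (fun x => (Jpos t x).ne')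

theorem den_pos (c₁ t : ℝ) (x : Sp) : 0 < jb t ^ 2 + (rho x - c₁ ^ 2 * t ^ 2) ^ 2 := by
  have := jb_pos t
  positivity

theorem cont_mw (c₁ c₂ t : ℝ) : Continuous (mw c₁ c₂ t) := by
  unfold mw
  have := cont_rho
  have := cont_th c₂ t
  have h : Continuous (fun x : Sp => 1 / (jb t ^ 2 + (rho x - c₁ ^ 2 * t ^ 2) ^ 2)) :=
    Continuous.div (by fun_prop) (by fun_prop) (fun x => (den_pos c₁ t x).ne')
  fun_prop

theorem mw_nonneg (c₁ c₂ t : ℝ) (x : Sp) : 0 ≤ mw c₁ c₂ t x := by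
  have := rho_nonneg x
  have := den_pos c₁ t x
  unfold mw; positivity

/-- The radial multiplier. -/
def Gm (c₁ c₂ t : ℝ) (r : ℝ) : ℝ :=
  ((c₂ ^ 2 * t ^ 2 - r) / (1 + t ^ 2 + r)) ^ 2 * Real.arctan ((r - c₁ ^ 2 * t ^ 2) / jb t) / jb t

theorem contDiff_Gm (c₁ c₂ t : ℝ) {n : WithTop ℕ∞} :
    ContDiff ℝ n (fun x : Sp => Gm c₁ c₂ t (rho x)) := by
  unfold Gm
  have := contDiff_rho (n := n)
  have h1 : ContDiff ℝ n (fun x : Sp => (c₂ ^ 2 * t ^ 2 - rho x) / (1 + t ^ 2 + rho x)) :=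
    ContDiff.div (by fun_prop) (by fun_prop) (fun x => (Jpos t x).ne')
  have h2 : ContDiff ℝ n (fun x : Sp => Real.arctan ((rho x - c₁ ^ 2 * t ^ 2) / jb t)) :=
    Real.contDiff_arctan.comp (by fun_prop)
  fun_prop

theorem deriv_Gm (c₁ c₂ t : ℝ) (x : Sp) :
    HasDerivAt (Gm c₁ c₂ t)
      ((2 * th c₂ t x * (-(1 + th c₂ t x) / (1 + t ^ 2 + rho x))
        * Real.arctan ((rho x - c₁ ^ 2 * t ^ 2) / jb t)) / jb t
        + th c₂ t x ^ 2 * (1 / (jb t ^ 2 + (rho x - c₁ ^ 2 * t ^ 2) ^ 2))) (rho x) := by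
  have hJ := Jpos t x
  have hT := jb_pos t
  have hden := den_pos c₁ t x
  have h1 : HasDerivAt (fun r => c₂ ^ 2 * t ^ 2 - r) (-1) (rho x) := by
    simpa using (hasDerivAt_id (rho x)).const_sub (c₂ ^ 2 * t ^ 2)
  have h2 : HasDerivAt (fun r => 1 + t ^ 2 + r) 1 (rho x) :=
    (hasDerivAt_id (rho x)).const_add _
  have h3 := h1.fun_div h2 hJ.ne'
  have h4 : HasDerivAt (fun r => (r - c₁ ^ 2 * t ^ 2) / jb t) (1 / jb t) (rho x) :=
    ((hasDerivAt_id (rho x)).sub_const _).div_const _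
  have h5 := h4.arctan
  have h6 := ((h3.fun_pow 2).fun_mul h5).div_const (jb t)
  refine h6.congr_deriv ?_
  have e : 1 / (1 + ((rho x - c₁ ^ 2 * t ^ 2) / jb t) ^ 2) * (1 / jb t) / jb t
      = 1 / (jb t ^ 2 + (rho x - c₁ ^ 2 * t ^ 2) ^ 2) := by
    have : 1 + ((rho x - c₁ ^ 2 * t ^ 2) / jb t) ^ 2
      = (jb t ^ 2 + (rho x - c₁ ^ 2 * t ^ 2) ^ 2) / jb t ^ 2 := by field_simp
    rw [this]; field_simp
  rw [← e]
  set κ := 1 / (1 + ((rho x - c₁ ^ 2 * t ^ 2) / jb t) ^ 2)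
  set α := Real.arctan ((rho x - c₁ ^ 2 * t ^ 2) / jb t)
  have e2 : (-1 * (1 + t ^ 2 + rho x) - (c₂ ^ 2 * t ^ 2 - rho x) * 1) / (1 + t ^ 2 + rho x) ^ 2
      = -(1 + th c₂ t x) / (1 + t ^ 2 + rho x) := by
    unfold th; field_simp; ring
  rw [e2]
  have e3 : (c₂ ^ 2 * t ^ 2 - rho x) / (1 + t ^ 2 + rho x) = th c₂ t x := rfl
  rw [e3]
  push_cast
  ring

theorem mor_div (c₁ c₂ t : ℝ) {g : Pt → ℝ} (hg : ContDiff ℝ (⊤ : ℕ∞) g)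
    (hc : HasCompactSupport g) :
    ∃ D : Sp → ℝ, Integrable D ∧ ∫ x, D x = 0 ∧ ∀ x,
      2 * mw c₁ c₂ t x * g (Fin.cons t x) ^ 2 ≤ D x +
        (8 * (c₂ ^ 2 + 1) * (1 + (c₂ ^ 2 + 1)) + 8 * (c₂ ^ 2 + 1) ^ 2 + 2) / jb t *
        (g (Fin.cons t x) ^ 2 + sw c₂ t x * ∑ i : Fin 3, pd i.succ g (Fin.cons t x) ^ 2) := by
  have W1 : ContDiff ℝ 1 (sl t g) := contDiff_sl t (hg.of_le (by simp))
  have Wd : ∀ x, DifferentiableAt ℝ (sl t g) x := fun x => W1.differentiable (by simp) x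
  have G1 := contDiff_Gm c₁ c₂ t (n := 1)
  have Gd : ∀ x, DifferentiableAt ℝ (fun y : Sp => Gm c₁ c₂ t (rho y)) x :=
    fun x => G1.differentiable (by simp) x
  have Xd : ∀ (i : Fin 3) (x : Sp), DifferentiableAt ℝ (fun y : Sp => y i) x := by
    intro i x; fun_prop
  let F : Fin 3 → Sp → ℝ := fun i y => (Gm c₁ c₂ t (rho y) * y i) * (sl t g y * sl t g y)
  have F1 : ∀ i, ContDiff ℝ 1 (F i) := by
    intro i
    exact (G1.mul (contDiff_apply ℝ ℝ i)).mul (W1.mul W1)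
  have Fc : ∀ i, HasCompactSupport (F i) := by
    intro i
    exact ((hcs_sl t hc).mul_right (f' := sl t g)).mul_left
  have FI := fun i => int_sd (F1 i) (Fc i) i
  refine ⟨fun x => ∑ i, sd i (F i) x, integrable_finsetSum _ fun i _ => (FI i).1, ?_, ?_⟩
  · rw [integral_finsetSum _ fun i _ => (FI i).1]
    simp [(FI _).2]
  intro x
  have hJ := Jpos t x
  have hρ := rho_nonneg x
  have hmain := mor_alg (jb t) (1 + t ^ 2 + rho x) (rho x) (th c₂ t x)
    (Real.arctan ((rho x - c₁ ^ 2 * t ^ 2) / jb t)) (g (Fin.cons t x))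
    (∑ i : Fin 3, x i * pd i.succ g (Fin.cons t x)) (sw c₂ t x)
    (∑ i : Fin 3, pd i.succ g (Fin.cons t x) ^ 2) (c₂ ^ 2 + 1)
    (1 / (jb t ^ 2 + (rho x - c₁ ^ 2 * t ^ 2) ^ 2)) (∑ i, sd i (F i) x)
    (jb_pos t) hJ hρ (by linarith [sq_nonneg t]) (abs_theta_le c₂ t x) (abs_arctan_le _) ?_ ?_
  · exact hmain
  · have h1 : (∑ i : Fin 3, x i * pd i.succ g (Fin.cons t x)) ^ 2
        ≤ rho x * ∑ i : Fin 3, pd i.succ g (Fin.cons t x) ^ 2 := by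
      have := Finset.sum_mul_sq_le_sq_mul_sq Finset.univ (fun i : Fin 3 => x i)
        (fun i => pd i.succ g (Fin.cons t x))
      rwa [Fin.sum_univ_three (f := fun i => x i ^ 2)] at this
    have h2 : th c₂ t x ^ 2 * rho x ≤ sw c₂ t x := by
      have e : sw c₂ t x = th c₂ t x ^ 2 * (1 + t ^ 2 + rho x) := by
        unfold sw th; field_simp
      rw [e]
      exact mul_le_mul_of_nonneg_left (by linarith [sq_nonneg t]) (sq_nonneg _)
    calc _ ≤ th c₂ t x ^ 2 * (rho x * ∑ i : Fin 3, pd i.succ g (Fin.cons t x) ^ 2) :=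
          mul_le_mul_of_nonneg_left h1 (sq_nonneg _)
      _ = th c₂ t x ^ 2 * rho x * ∑ i : Fin 3, pd i.succ g (Fin.cons t x) ^ 2 := by ring
      _ ≤ _ := mul_le_mul_of_nonneg_right h2 (by positivity)
  · have dw : ∀ i : Fin 3, sd i (sl t g) x = pd i.succ g (Fin.cons t x) := by
      intro i
      rw [sd_sl t (hg.differentiable (by simp))]
      rfl
    have hGv : Gm c₁ c₂ t (rho x) = th c₂ t x ^ 2 *
      Real.arctan ((rho x - c₁ ^ 2 * t ^ 2) / jb t) / jb t := rfl
    have sF : ∀ i, sd i (F i) x =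
        ((((2 * th c₂ t x * (-(1 + th c₂ t x) / (1 + t ^ 2 + rho x))
          * Real.arctan ((rho x - c₁ ^ 2 * t ^ 2) / jb t)) / jb t
          + th c₂ t x ^ 2 * (1 / (jb t ^ 2 + (rho x - c₁ ^ 2 * t ^ 2) ^ 2))) * (2 * x i)) * x i
          + th c₂ t x ^ 2 * Real.arctan ((rho x - c₁ ^ 2 * t ^ 2) / jb t) / jb t * 1)
            * (sl t g x * sl t g x)
          + (th c₂ t x ^ 2 * Real.arctan ((rho x - c₁ ^ 2 * t ^ 2) / jb t) / jb t * x i)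
            * (pd i.succ g (Fin.cons t x) * sl t g x
              + sl t g x * pd i.succ g (Fin.cons t x)) := by
      intro i
      simp only [F]
      rw [sd_mul i x ((Gd x).fun_mul (Xd i x)) ((Wd x).fun_mul (Wd x)), sd_mul i x (Gd x) (Xd i x),
        sd_mul i x (Wd x) (Wd x), sd_coord, sd_comp_rho i x (deriv_Gm c₁ c₂ t x), dw, hGv]
    rw [Finset.sum_congr rfl fun i _ => sF i]
    simp only [Fin.sum_univ_three, sl]
    generalize Real.arctan ((rho x - c₁ ^ 2 * t ^ 2) / jb t) = α
    generalize 1 / (jb t ^ 2 + (rho x - c₁ ^ 2 * t ^ 2) ^ 2) = κ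
    generalize th c₂ t x = θ
    generalize -(1 + θ) / (1 + t ^ 2 + rho x) = θ'
    unfold rho
    ring

theorem mor_int (c₁ c₂ : ℝ) : ∃ C : ℝ, 0 < C ∧ ∀ (v : Pt → ℝ), ContDiff ℝ (⊤ : ℕ∞) v →
    HasCompactSupport v → ∀ t : ℝ, 0 ≤ t →
    ∫ x, mw c₁ c₂ t x * ∑ a, (pd a v (Fin.cons t x)) ^ 2 ≤ C * (jb t)⁻¹ * Qfac c₂ v t ^ 2 := by
  obtain ⟨C, hC, hks⟩ := ks_int c₂
  set K : ℝ := 8 * (c₂ ^ 2 + 1) * (1 + (c₂ ^ 2 + 1)) + 8 * (c₂ ^ 2 + 1) ^ 2 + 2 with hK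
  have hK0 : 0 < K := by positivity
  refine ⟨K * (1 + C), by positivity, ?_⟩
  intro v hv hcv t ht
  have hT := jb_pos t
  choose D hD1 hD2 hD3 using fun a => mor_div c₁ c₂ t (contDiff_pd hv a) (hcs_pd hcv a)
  obtain ⟨-, q1, -, -⟩ := Qfac_parts c₂ v t
  have hk := hks v hv hcv t ht
  have ga : ∀ a, Good (fun x => (pd a v (Fin.cons t x)) ^ 2) := fun a =>
    (good_sl t (contDiff_pd hv a).continuous (hcs_pd hcv a)).sq
  have g1 : Good (fun x => ∑ a, (pd a v (Fin.cons t x)) ^ 2) := Good.sum _ ga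
  have g2 : Good (fun x => (1 + sw c₂ t x) * ∑ a, ∑ b, (pd a (pd b v) (Fin.cons t x)) ^ 2) := by
    refine Good.mul_left (Good.sum _ fun a => Good.sum _ fun b => Good.sq ?_)
      (continuous_const.add (contDiff_sw c₂ t (n := 1)).continuous)
    exact good_sl t (contDiff_pd (contDiff_pd hv b) a).continuous (hcs_pd (hcs_pd hcv b) a)
  have gl := g1.mul_left (cont_mw c₁ c₂ t)
  have hpt : ∀ x, mw c₁ c₂ t x * ∑ a, (pd a v (Fin.cons t x)) ^ 2 ≤
      (1 / 2) * (∑ a, D a x) + (K / jb t) * ((∑ a, (pd a v (Fin.cons t x)) ^ 2)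
        + (1 + sw c₂ t x) * ∑ a, ∑ b, (pd a (pd b v) (Fin.cons t x)) ^ 2) := by
    intro x
    have h1 := Finset.sum_le_sum (s := Finset.univ) fun a _ => hD3 a x
    rw [← Finset.mul_sum, Finset.sum_add_distrib, ← Finset.mul_sum, Finset.sum_add_distrib,
      ← Finset.mul_sum] at h1
    have h2 : ∑ a, ∑ i : Fin 3, pd i.succ (pd a v) (Fin.cons t x) ^ 2
        ≤ ∑ a, ∑ b, (pd a (pd b v) (Fin.cons t x)) ^ 2 := by
      rw [Finset.sum_comm (s := (Finset.univ : Finset (Fin 4)))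
        (t := (Finset.univ : Finset (Fin 3))), Fin.sum_univ_succ (n := 3)
        (f := fun a => ∑ b, (pd a (pd b v) (Fin.cons t x)) ^ 2)]
      have : 0 ≤ ∑ b, (pd 0 (pd b v) (Fin.cons t x)) ^ 2 := by positivity
      linarith
    have hs := sw_nonneg c₂ t x
    have h3 := mul_le_mul_of_nonneg_left h2 hs
    have h4 : 0 ≤ ∑ a, ∑ b, (pd a (pd b v) (Fin.cons t x)) ^ 2 := by positivity
    have h5 : 0 ≤ ∑ a, (pd a v (Fin.cons t x)) ^ 2 := by positivity
    have h8 : 0 ≤ sw c₂ t x * ∑ a, ∑ b, (pd a (pd b v) (Fin.cons t x)) ^ 2 := mul_nonneg hs h4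
    have h6 : (∑ a, (pd a v (Fin.cons t x)) ^ 2) + sw c₂ t x *
        ∑ a, ∑ i : Fin 3, pd i.succ (pd a v) (Fin.cons t x) ^ 2
        ≤ 2 * ((∑ a, (pd a v (Fin.cons t x)) ^ 2)
        + (1 + sw c₂ t x) * ∑ a, ∑ b, (pd a (pd b v) (Fin.cons t x)) ^ 2) := by
      rw [add_mul]
      linarith
    have h7 := mul_le_mul_of_nonneg_left h6 (div_pos hK0 hT).le
    linarith
  have iD : Integrable (fun x => ∑ a, D a x) := integrable_finsetSum _ fun a _ => hD1 a
  have h := integral_mono gl.integrable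
    ((iD.const_mul (1 / 2)).add ((g1.add g2).integrable.const_mul (K / jb t))) hpt
  have e := integral_add (iD.const_mul (1 / 2)) ((g1.add g2).integrable.const_mul (K / jb t))
  simp only [Pi.add_apply] at h
  rw [e, integral_const_mul, integral_const_mul, integral_add g1.integrable g2.integrable,
    integral_finsetSum _ fun a _ => hD1 a] at h
  simp only [hD2, Finset.sum_const_zero, mul_zero, zero_add] at h
  refine h.trans ?_
  have h9 := mul_le_mul_of_nonneg_left (add_le_add q1 hk) (div_pos hK0 hT).le
  refine h9.trans (le_of_eq ?_)
  rw [div_eq_mul_inv]; ring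

/-! ### Conclusion -/

theorem Good.sqrt {f : Sp → ℝ} (h : Good f) : Good (fun x => Real.sqrt (f x)) :=
  ⟨h.1.sqrt, h.2.comp_left (g := Real.sqrt) Real.sqrt_zero⟩

theorem Good.abs {f : Sp → ℝ} (h : Good f) : Good (fun x => |f x|) :=
  ⟨h.1.abs, h.2.comp_left (g := fun y : ℝ => |y|) abs_zero⟩

/-- Cauchy-Schwarz for continuous compactly supported functions. -/
theorem cs_good {f g : Sp → ℝ} (hf : Good f) (hg : Good g) (f0 : ∀ x, 0 ≤ f x)
    (g0 : ∀ x, 0 ≤ g x) :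
    ∫ x, f x * g x ≤ (∫ x, f x ^ 2) ^ ((1:ℝ)/2) * (∫ x, g x ^ 2) ^ ((1:ℝ)/2) := by
  have h := integral_mul_le_Lp_mul_Lq_of_nonneg (μ := (volume : Measure Sp))
    (p := 2) (q := 2) Real.HolderConjugate.two_two
    (Filter.Eventually.of_forall f0) (Filter.Eventually.of_forall g0)
    (hf.1.memLp_of_hasCompactSupport hf.2) (hg.1.memLp_of_hasCompactSupport hg.2)
  simpa using h

theorem final_pointwise {A G R T s m C : ℝ} (hA : 0 ≤ A) (hG : 0 ≤ G) (hR : 0 < R) (hT : 0 < T)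
    (hs : 0 ≤ s) (hC : 1 ≤ C) (hm : 0 ≤ m)
    (h : T ^ 2 ≤ C * s ∨ T ^ 2 ≤ C * s * m * R ^ 2) :
    A * G * R⁻¹ ≤ C * T⁻¹ * ((Real.sqrt s * A) * (G / R) + (Real.sqrt s * A) * (Real.sqrt m * G)) := by
  have hs2 := Real.sq_sqrt hs
  have hm2 := Real.sq_sqrt hm
  have hs0 := Real.sqrt_nonneg s
  have hm0 := Real.sqrt_nonneg m
  have hC2 : C ≤ C ^ 2 := by nlinarith
  have key : T ≤ C * Real.sqrt s * (1 + Real.sqrt m * R) := by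
    rcases h with h | h
    · have : T ≤ C * Real.sqrt s := by
        refine (sq_le_sq₀ hT.le (by positivity)).1 ?_
        rw [mul_pow, hs2]
        exact h.trans (mul_le_mul_of_nonneg_right hC2 hs)
      refine this.trans (le_mul_of_one_le_right (by positivity) ?_)
      have : 0 ≤ Real.sqrt m * R := by positivity
      linarith
    · have : T ≤ C * Real.sqrt s * (Real.sqrt m * R) := by
        refine (sq_le_sq₀ hT.le (by positivity)).1 ?_
        rw [mul_pow, mul_pow, mul_pow, hs2, hm2]
        refine h.trans ?_
        have := mul_le_mul_of_nonneg_right hC2 (show 0 ≤ s * m * R ^ 2 by positivity)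
        linarith
      refine this.trans (mul_le_mul_of_nonneg_left (by linarith) (by positivity))
  have h1 := mul_le_mul_of_nonneg_left key (show 0 ≤ A * G * R⁻¹ * T⁻¹ by positivity)
  calc A * G * R⁻¹ = A * G * R⁻¹ * T⁻¹ * T := by field_simp
    _ ≤ _ := h1
    _ = _ := by field_simp

theorem d2abs_sq_le (u : Pt → ℝ) (X : Pt) :
    d2abs u X ^ 2 ≤ 16 * ∑ a, ∑ b, (pd a (pd b u) X) ^ 2 := by
  unfold d2abs
  have h1 := sq_sum_le_card_mul_sum_sq (s := (Finset.univ : Finset (Fin 4)))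
    (f := fun a => ∑ b, |pd a (pd b u) X|)
  have h2 : ∀ a, (∑ b, |pd a (pd b u) X|) ^ 2 ≤ 4 * ∑ b, (pd a (pd b u) X) ^ 2 := by
    intro a
    have := sq_sum_le_card_mul_sum_sq (s := (Finset.univ : Finset (Fin 4)))
      (f := fun b => |pd a (pd b u) X|)
    simpa using this
  have h3 := Finset.sum_le_sum (s := Finset.univ) fun a _ => h2 a
  rw [← Finset.mul_sum] at h3
  simp only [Finset.card_univ, Fintype.card_fin] at h1
  push_cast at h1
  linarith

theorem half_pow_le {I C Q : ℝ} (hQ : 0 ≤ Q) (hC : 0 ≤ C) (h : I ≤ C * Q ^ 2) :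
    I ^ ((1:ℝ)/2) ≤ Real.sqrt C * Q := by
  rw [← Real.sqrt_eq_rpow]
  calc Real.sqrt I ≤ Real.sqrt (C * Q ^ 2) := Real.sqrt_le_sqrt h
    _ = _ := by rw [Real.sqrt_mul hC, Real.sqrt_sq hQ]

theorem jb_decay (t : ℝ) : (jb t)⁻¹ * Real.sqrt ((jb t)⁻¹) ≤ (jb t) ^ (-(4:ℝ)/3) := by
  have h := jb_pos t
  have e : (jb t)⁻¹ * Real.sqrt ((jb t)⁻¹) = jb t ^ (-(3:ℝ)/2) := by
    rw [Real.sqrt_eq_rpow, ← Real.rpow_neg_one, ← Real.rpow_mul h.le, ← Real.rpow_add h]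
    norm_num
  rw [e]
  exact Real.rpow_le_rpow_of_exponent_le (one_le_jb t) (by norm_num)

/-- Corollary 3.3 of the paper: the bound for interactions of waves with
different speeds `c₁ ≠ c₂`. -/
theorem stmt_14 (c₁ c₂ : ℝ) (hc₁ : 0 < c₁) (hc₂ : 0 < c₂) (hne : c₁ ≠ c₂) :
    ∃ C : ℝ, 0 < C ∧
      ∀ (u v : Pt → ℝ), ContDiff ℝ (⊤ : ℕ∞) u → HasCompactSupport u →
        ContDiff ℝ (⊤ : ℕ∞) v → HasCompactSupport v →
        ∀ t : ℝ, 0 ≤ t →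
          ∫ x : Sp, d2abs u (Fin.cons t x) * gradNorm v (Fin.cons t x) * (jb (rad x))⁻¹
            ≤ C * (jb t)⁻¹ * Qfac c₁ u t *
                (∫ x : Sp, (∑ a, (pd a v (Fin.cons t x)) ^ 2) / jb (rad x) ^ 2) ^ ((1:ℝ)/2)
              + C * (jb t) ^ (-(4:ℝ)/3) * Qfac c₁ u t * Qfac c₂ v t := by
  obtain ⟨Cw, hCw, hw⟩ := alg_weight c₁ c₂ hc₁ hc₂ hne
  obtain ⟨Cu, hCu, hks⟩ := ks_int c₁
  obtain ⟨Cm, hCm, hmor⟩ := mor_int c₁ c₂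
  refine ⟨Cw * Real.sqrt (16 * Cu) * (1 + Real.sqrt Cm), by positivity, ?_⟩
  intro u v hu hcu hv hcv t ht
  have hT := jb_pos t
  obtain ⟨Qu0, -⟩ := Qfac_parts c₁ u t
  obtain ⟨Qv0, -⟩ := Qfac_parts c₂ v t
  have hR : ∀ x : Sp, 0 < jb (rad x) := fun x => jb_pos _
  have swc : Continuous (sw c₁ t) := (contDiff_sw c₁ t (n := 1)).continuous
  have hs : ∀ x, 0 ≤ 1 + sw c₁ t x := fun x => by linarith [sw_nonneg c₁ t x]
  have gd2 : Good (fun x => d2abs u (Fin.cons t x)) := by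
    unfold d2abs
    exact Good.sum _ fun a => Good.sum _ fun b => Good.abs
      (good_sl t (contDiff_pd (contDiff_pd hu b) a).continuous (hcs_pd (hcs_pd hcu b) a))
  have gd2s : Good (fun x => ∑ a, ∑ b, (pd a (pd b u) (Fin.cons t x)) ^ 2) :=
    Good.sum _ fun a => Good.sum _ fun b => Good.sq
      (good_sl t (contDiff_pd (contDiff_pd hu b) a).continuous (hcs_pd (hcs_pd hcu b) a))
  have gg2 : Good (fun x => ∑ a, (pd a v (Fin.cons t x)) ^ 2) :=
    Good.sum _ fun a => (good_sl t (contDiff_pd hv a).continuous (hcs_pd hcv a)).sq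
  have gg : Good (fun x => gradNorm v (Fin.cons t x)) := gg2.sqrt
  have gsq : ∀ x : Sp, gradNorm v (Fin.cons t x) ^ 2 = ∑ a, (pd a v (Fin.cons t x)) ^ 2 :=
    fun x => Real.sq_sqrt (by positivity)
  have jc : Continuous (fun x : Sp => (jb (rad x))⁻¹) :=
    (cont_jb.comp cont_rad).inv₀ fun x => (hR x).ne'
  have d0 : ∀ x : Sp, 0 ≤ d2abs u (Fin.cons t x) := fun x => by unfold d2abs; positivity
  have g0 : ∀ x : Sp, 0 ≤ gradNorm v (Fin.cons t x) := fun x => Real.sqrt_nonneg _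
  have gf : Good (fun x => Real.sqrt (1 + sw c₁ t x) * d2abs u (Fin.cons t x)) :=
    gd2.mul_left (continuous_const.add swc).sqrt
  have g1 : Good (fun x => gradNorm v (Fin.cons t x) / jb (rad x)) := by
    simpa [div_eq_mul_inv] using gg.mul_right jc
  have gB : Good (fun x => Real.sqrt (mw c₁ c₂ t x) * gradNorm v (Fin.cons t x)) :=
    gg.mul_left (cont_mw c₁ c₂ t).sqrt
  have hpt : ∀ x : Sp, d2abs u (Fin.cons t x) * gradNorm v (Fin.cons t x) * (jb (rad x))⁻¹ ≤
      Cw * (jb t)⁻¹ * ((Real.sqrt (1 + sw c₁ t x) * d2abs u (Fin.cons t x))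
          * (gradNorm v (Fin.cons t x) / jb (rad x))
        + (Real.sqrt (1 + sw c₁ t x) * d2abs u (Fin.cons t x))
          * (Real.sqrt (mw c₁ c₂ t x) * gradNorm v (Fin.cons t x))) := by
    intro x
    refine final_pointwise (d0 x) (g0 x) (hR x) hT (hs x) hCw (mw_nonneg c₁ c₂ t x) ?_
    have hden := den_pos c₁ t x
    rw [jb_sq, jb_sq, rad_sq]
    rcases hw (t ^ 2) (rho x) (sq_nonneg t) (rho_nonneg x) with h | h
    · exact Or.inl h
    · right
      rw [jb_sq] at hden
      unfold mw
      rw [jb_sq]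
      have h2 := (le_div_iff₀ hden).2 h
      refine h2.trans (le_of_eq ?_)
      unfold sw th
      rw [div_eq_mul_one_div _ (1 + t ^ 2 + (rho x - c₁ ^ 2 * t ^ 2) ^ 2)]
      ring
  have if1 := gf.mul_right g1.1
  have ifB := gf.mul_right gB.1
  have hI := integral_mono ((gd2.mul_right gg.1).mul_right jc).integrable
    ((if1.add ifB).integrable.const_mul (Cw * (jb t)⁻¹)) hpt
  rw [integral_const_mul, integral_add if1.integrable ifB.integrable] at hI
  refine hI.trans ?_
  have f0 : ∀ x : Sp, 0 ≤ Real.sqrt (1 + sw c₁ t x) * d2abs u (Fin.cons t x) :=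
    fun x => mul_nonneg (Real.sqrt_nonneg _) (d0 x)
  have c1 := cs_good gf g1 f0 (fun x => div_nonneg (g0 x) (hR x).le)
  have c2 := cs_good gf gB f0 (fun x => mul_nonneg (Real.sqrt_nonneg _) (g0 x))
  have e1 : ∫ x : Sp, (gradNorm v (Fin.cons t x) / jb (rad x)) ^ 2
      = ∫ x : Sp, (∑ a, (pd a v (Fin.cons t x)) ^ 2) / jb (rad x) ^ 2 := by
    congr 1; funext x; rw [div_pow, gsq]
  have e2 : ∫ x : Sp, (Real.sqrt (mw c₁ c₂ t x) * gradNorm v (Fin.cons t x)) ^ 2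
      = ∫ x, mw c₁ c₂ t x * ∑ a, (pd a v (Fin.cons t x)) ^ 2 := by
    congr 1; funext x; rw [mul_pow, gsq, Real.sq_sqrt (mw_nonneg c₁ c₂ t x)]
  have bf : ∫ x : Sp, (Real.sqrt (1 + sw c₁ t x) * d2abs u (Fin.cons t x)) ^ 2
      ≤ 16 * Cu * Qfac c₁ u t ^ 2 := by
    have h1 : ∀ x : Sp, (Real.sqrt (1 + sw c₁ t x) * d2abs u (Fin.cons t x)) ^ 2 ≤
        16 * ((1 + sw c₁ t x) * ∑ a, ∑ b, (pd a (pd b u) (Fin.cons t x)) ^ 2) := by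
      intro x
      rw [mul_pow, Real.sq_sqrt (hs x)]
      have := mul_le_mul_of_nonneg_left (d2abs_sq_le u (Fin.cons t x)) (hs x)
      linarith
    have h2 := integral_mono gf.sq.integrable
      ((gd2s.mul_left (continuous_const.add swc)).integrable.const_mul 16) h1
    rw [integral_const_mul] at h2
    simp only [Pi.add_apply] at h2
    have := hks u hu hcu t ht
    linarith
  have bf' := half_pow_le Qu0 (by positivity) bf
  have bm := hmor v hv hcv t ht
  rw [← e2] at bm
  have bm' := half_pow_le Qv0 (by positivity) bm
  rw [Real.sqrt_mul hCm.le] at bm'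
  rw [e1] at c1
  set I1 := (∫ x : Sp, (∑ a, (pd a v (Fin.cons t x)) ^ 2) / jb (rad x) ^ 2) ^ ((1:ℝ)/2) with hI1
  have I10 : 0 ≤ I1 := Real.rpow_nonneg (integral_nonneg fun x => by positivity) _
  have a1 := c1.trans (mul_le_mul_of_nonneg_right bf' I10)
  have a2 := c2.trans (mul_le_mul bf' bm'
    (Real.rpow_nonneg (integral_nonneg fun x => sq_nonneg _) _) (by positivity))
  refine (mul_le_mul_of_nonneg_left (add_le_add a1 a2) (by positivity)).trans ?_
  have hd := jb_decay t
  set S := Real.sqrt (16 * Cu)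
  set M := Real.sqrt Cm
  have S0 : 0 ≤ S := Real.sqrt_nonneg _
  have M0 : 0 ≤ M := Real.sqrt_nonneg _
  have p1 : 0 ≤ M * (Cw * S * (jb t)⁻¹ * Qfac c₁ u t * I1) := by positivity
  have p2 := mul_le_mul_of_nonneg_left hd
    (show 0 ≤ Cw * S * M * Qfac c₁ u t * Qfac c₂ v t by positivity)
  have p3 : 0 ≤ Cw * S * jb t ^ (-(4:ℝ)/3) * Qfac c₁ u t * Qfac c₂ v t := by positivity
  linarith
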